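/- arXiv:2108.00411 — 6 statements merged into one kernel-verified Lean document; each statement's English description precedes it below -/
import Mathlib

section
/- Let b be a slowly varying function on (0,∞) and let μ:(0,∞)→(0,∞) be a measurable function. If for some δ>0 both μ and the function t ↦ t/μ(t)^δ are almost increasing on (0,∞), then the composition b∘μ is slowly varying on (0,∞). -/
open Set MeasureTheory Real

/-- `f` is almost increasing on `S`: there is `C > 0` with `f s ≤ C * f t` whenever `s ≤ t` in `S`. -/
def AlmostIncreasingOn (f : ℝ → ℝ) (S : Set ℝ) : Prop :=
  ∃ C > (0:ℝ), ∀ s ∈ S, ∀ t ∈ S, s ≤ t → f s ≤ C * f t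

/-- `f` is almost decreasing on `S`: there is `C > 0` with `f t ≤ C * f s` whenever `s ≤ t` in `S`. -/
def AlmostDecreasingOn (f : ℝ → ℝ) (S : Set ℝ) : Prop :=
  ∃ C > (0:ℝ), ∀ s ∈ S, ∀ t ∈ S, s ≤ t → f t ≤ C * f s

/-- A measurable positive function `b` on `(0,∞)` is slowly varying if for every `ε > 0`,
`t ↦ t^ε * b t` is almost increasing and `t ↦ t^(-ε) * b t` is almost decreasing on `(0,∞)`. -/
def SlowlyVarying (b : ℝ → ℝ) : Prop :=
  Measurable b ∧ (∀ t ∈ Ioi (0:ℝ), 0 < b t) ∧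
  ∀ ε > (0:ℝ), AlmostIncreasingOn (fun t => t ^ ε * b t) (Ioi 0) ∧
    AlmostDecreasingOn (fun t => t ^ (-ε) * b t) (Ioi 0)

/-- Almost decrease of `t ↦ t ^ (-ε) * b t`, with the negative powers cleared. -/
lemma almostDecreasingOn_rpow_neg_mul_iff {b : ℝ → ℝ} {ε : ℝ} :
    AlmostDecreasingOn (fun t => t ^ (-ε) * b t) (Ioi 0) ↔
      ∃ C > (0:ℝ), ∀ s ∈ Ioi (0:ℝ), ∀ t ∈ Ioi (0:ℝ), s ≤ t → s ^ ε * b t ≤ C * (t ^ ε * b s) := by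
  have key (C s t : ℝ) (hs : 0 < s) (ht : 0 < t) :
      t ^ (-ε) * b t ≤ C * (s ^ (-ε) * b s) ↔ s ^ ε * b t ≤ C * (t ^ ε * b s) := by
    have hS := rpow_pos_of_pos hs ε
    have hT := rpow_pos_of_pos ht ε
    rw [rpow_neg hs.le, rpow_neg ht.le, inv_mul_eq_div, inv_mul_eq_div, mul_div_assoc',
      div_le_div_iff₀ hT hS, mul_comm (b t), mul_assoc, mul_comm (b s)]
  constructor
  · rintro ⟨C, hC, h⟩
    exact ⟨C, hC, fun s hs t ht hst => (key C s t hs ht).1 (h s hs t ht hst)⟩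
  · rintro ⟨C, hC, h⟩
    exact ⟨C, hC, fun s hs t ht hst => (key C s t hs ht).2 (h s hs t ht hst)⟩

/-- The defining inequalities of a slowly varying function persist, with a larger constant,
for points that are ordered only up to a constant factor. -/
lemma SlowlyVarying.exists_bound_of_le_mul {b : ℝ → ℝ} (hb : SlowlyVarying b) {η K : ℝ}
    (hη : 0 < η) (hK : 0 < K) :
    ∃ C > (0:ℝ), ∀ x > (0:ℝ), ∀ y > (0:ℝ), x ≤ K * y →
      x ^ η * b x ≤ C * (y ^ η * b y) ∧ x ^ η * b y ≤ C * (y ^ η * b x) := by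
  obtain ⟨-, hpos, hsv⟩ := hb
  obtain ⟨⟨A, hA, hinc⟩, hdec⟩ := hsv η hη
  obtain ⟨D, hD, hdec⟩ := almostDecreasingOn_rpow_neg_mul_iff.1 hdec
  set L := K ^ η
  have hL : 0 < L := rpow_pos_of_pos hK η
  refine ⟨A + D + L * A * L + L * D * L, by positivity, fun x hx y hy hxy => ?_⟩
  have hX := rpow_pos_of_pos hx η
  have hY := rpow_pos_of_pos hy η
  have hbx := hpos x hx
  have hby := hpos y hy
  have hXY : x ^ η ≤ L * y ^ η := by
    rw [← mul_rpow hK.le hy.le]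
    exact rpow_le_rpow hx.le hxy hη.le
  have enlarge {c u v w : ℝ} (h : u ≤ c * (v * w)) (hv : 0 < v) (hw : 0 < w)
      (hc : c ≤ A + D + L * A * L + L * D * L) :
      u ≤ (A + D + L * A * L + L * D * L) * (v * w) :=
    h.trans (by gcongr)
  have h₁ : 0 < L * A * L := by positivity
  have h₂ : 0 < L * D * L := by positivity
  rcases le_total x y with h | h
  · exact ⟨enlarge (hinc x hx y hy h) hY hby (by linarith),
      enlarge (hdec x hx y hy h) hY hbx (by linarith)⟩
  · have swap {c u v : ℝ} (hc : 0 < c) (hu : 0 < u) (hv : 0 < v)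
        (huv : y ^ η * u ≤ c * (x ^ η * v)) : x ^ η * u ≤ L * c * L * (y ^ η * v) :=
      calc x ^ η * u ≤ L * y ^ η * u := by gcongr
        _ = L * (y ^ η * u) := by ring
        _ ≤ L * (c * (x ^ η * v)) := by gcongr
        _ ≤ L * (c * (L * y ^ η * v)) := by gcongr
        _ = L * c * L * (y ^ η * v) := by ring
    exact ⟨enlarge (swap hD hbx hby (hdec y hy x hx h)) hY hby (by linarith),
      enlarge (swap hA hby hbx (hinc y hy x hx h)) hY hbx (by linarith)⟩

theorem slowly_varying_comp (b μ : ℝ → ℝ) (hb : SlowlyVarying b)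
    (hμmeas : Measurable μ) (hμpos : ∀ t ∈ Ioi (0:ℝ), 0 < μ t)
    (δ : ℝ) (hδ : 0 < δ)
    (hμinc : AlmostIncreasingOn μ (Ioi 0))
    (hratio : AlmostIncreasingOn (fun t => t / μ t ^ δ) (Ioi 0)) :
    SlowlyVarying (b ∘ μ) := by
  obtain ⟨K, hK, hμinc⟩ := hμinc
  obtain ⟨R, hR, hratio⟩ := hratio
  refine ⟨hb.1.comp hμmeas, fun t ht => hb.2.1 _ (hμpos t ht), fun ε hε => ?_⟩
  obtain ⟨C, hC, hbound⟩ := hb.exists_bound_of_le_mul (mul_pos hδ hε) hK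
  have hM : 0 < R ^ ε := rpow_pos_of_pos hR ε
  have cancel {s t u v : ℝ} (hs : 0 < s) (ht : 0 < t) (hst : s ≤ t) (hu : 0 < u)
      (huv : μ s ^ (δ * ε) * u ≤ C * (μ t ^ (δ * ε) * v)) :
      s ^ ε * u ≤ R ^ ε * C * (t ^ ε * v) := by
    have hx := hμpos s hs
    have hy := hμpos t ht
    have hxδ := rpow_pos_of_pos hx δ
    have hyδ := rpow_pos_of_pos hy δ
    have hT := rpow_pos_of_pos ht ε
    have hr : s * μ t ^ δ ≤ R * t * μ s ^ δ := by
      have h := hratio s hs t ht hst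
      rwa [mul_div_assoc', div_le_div_iff₀ hxδ hyδ] at h
    have hpow : s ^ ε * μ t ^ (δ * ε) ≤ R ^ ε * t ^ ε * μ s ^ (δ * ε) := by
      rw [rpow_mul hx.le, rpow_mul hy.le, ← mul_rpow hs.le hyδ.le, ← mul_rpow hR.le ht.le,
        ← mul_rpow (mul_pos hR ht).le hxδ.le]
      exact rpow_le_rpow (mul_pos hs hyδ).le hr hε.le
    refine le_of_mul_le_mul_right ?_ (rpow_pos_of_pos hy (δ * ε))
    calc s ^ ε * u * μ t ^ (δ * ε) = s ^ ε * μ t ^ (δ * ε) * u := by ring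
      _ ≤ R ^ ε * t ^ ε * μ s ^ (δ * ε) * u := by gcongr
      _ = R ^ ε * t ^ ε * (μ s ^ (δ * ε) * u) := by ring
      _ ≤ R ^ ε * t ^ ε * (C * (μ t ^ (δ * ε) * v)) := by gcongr
      _ = R ^ ε * C * (t ^ ε * v) * μ t ^ (δ * ε) := by ring
  have hbound' (s : ℝ) (hs : 0 < s) (t : ℝ) (ht : 0 < t) (hst : s ≤ t) :=
    hbound (μ s) (hμpos s hs) (μ t) (hμpos t ht) (hμinc s hs t ht hst)
  refine ⟨⟨R ^ ε * C, mul_pos hM hC, fun s hs t ht hst => ?_⟩,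
    almostDecreasingOn_rpow_neg_mul_iff.2
      ⟨R ^ ε * C, mul_pos hM hC, fun s hs t ht hst => ?_⟩⟩
  · exact cancel hs ht hst (hb.2.1 _ (hμpos s hs)) (hbound' s hs t ht hst).1
  · exact cancel hs ht hst (hb.2.1 _ (hμpos t ht)) (hbound' s hs t ht hst).2
end

section
/- Let 1 ≤ p ≤ ∞, let (σ_k)_{k∈ℤ} be a sequence of positive reals with sup_{k∈ℤ} σ_{k+1}/σ_k < 1, and let (x_k)_{k∈ℤ} be a non-negative sequence. Then there exists a constant C > 0, depending only on p and on sup_{k∈ℤ} σ_{k+1}/σ_k, such that ‖(σ_k · Σ_{m≤k} x_m)_{k∈ℤ}‖_{ℓ_p(ℤ)} ≤ C·‖(σ_k·x_k)_{k∈ℤ}‖_{ℓ_p(ℤ)}; together with the trivial reverse inequality ‖(σ_k·x_k)‖_{ℓ_p(ℤ)} ≤ ‖(σ_k · Σ_{m≤k} x_m)‖_{ℓ_p(ℤ)}, the two quantities are equivalent. -/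
open scoped ENNReal

/-- The `ℓ_p(ℤ)` norm (with values in `ℝ≥0∞`) of a non-negative sequence indexed by `ℤ`,
for `1 ≤ p ≤ ∞`. -/
noncomputable def zlpNorm (p : ℝ≥0∞) (y : ℤ → ℝ≥0∞) : ℝ≥0∞ :=
  if p = ∞ then ⨆ k, y k else (∑' k, y k ^ p.toReal) ^ (1 / p.toReal)

theorem zlpNorm_mono {p : ℝ≥0∞} {y z : ℤ → ℝ≥0∞} (h : ∀ k, y k ≤ z k) :
    zlpNorm p y ≤ zlpNorm p z := by
  unfold zlpNorm
  split_ifs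
  · exact iSup_mono h
  · exact ENNReal.rpow_le_rpow
      (ENNReal.tsum_le_tsum fun k => ENNReal.rpow_le_rpow (h k) ENNReal.toReal_nonneg)
      (by positivity)

/-- Jensen's inequality for infinite weighted sums. -/
theorem ENNReal.tsum_mul_rpow_le {ι : Type*} {q : ℝ} (hq : 1 ≤ q) (w f : ι → ℝ≥0∞) :
    (∑' i, w i * f i) ^ q ≤ (∑' i, w i) ^ (q - 1) * ∑' i, w i * f i ^ q := by
  have hq0 : 0 < q := by linarith
  have hinv : 0 ≤ 1 - q⁻¹ := sub_nonneg.2 (inv_le_one_of_one_le₀ hq)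
  have key : ∑' i, w i * f i ≤ (∑' i, w i) ^ (1 - q⁻¹) * (∑' i, w i * f i ^ q) ^ q⁻¹ := by
    rw [ENNReal.tsum_eq_iSup_sum]
    refine iSup_le fun s => (ENNReal.inner_le_weight_mul_Lp_of_nonneg s hq w f).trans ?_
    gcongr
    · exact ENNReal.sum_le_tsum s
    · exact ENNReal.sum_le_tsum s
  calc (∑' i, w i * f i) ^ q
      ≤ ((∑' i, w i) ^ (1 - q⁻¹) * (∑' i, w i * f i ^ q) ^ q⁻¹) ^ q :=
        ENNReal.rpow_le_rpow key hq0.le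
    _ = (∑' i, w i) ^ (q - 1) * ∑' i, w i * f i ^ q := by
        rw [ENNReal.mul_rpow_of_nonneg _ _ hq0.le, ENNReal.rpow_inv_rpow hq0.ne',
          ← ENNReal.rpow_mul, sub_mul, one_mul, inv_mul_cancel₀ (ne_of_gt hq0)]

/-- Young's inequality for the convolution of a summable weight on `ℕ` with a sequence on `ℤ`. -/
theorem zlpNorm_tsum_mul_shift_le {p : ℝ≥0∞} (hp : 1 ≤ p) (w : ℕ → ℝ≥0∞) (y : ℤ → ℝ≥0∞) :
    zlpNorm p (fun k => ∑' j : ℕ, w j * y (k - j)) ≤ (∑' j, w j) * zlpNorm p y := by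
  unfold zlpNorm
  split_ifs with hpt
  · refine iSup_le fun k => ?_
    rw [← ENNReal.tsum_mul_right]
    exact ENNReal.tsum_le_tsum fun j => mul_le_mul_right (le_iSup y _) _
  · have hq : 1 ≤ p.toReal := by
      simpa using (ENNReal.toReal_le_toReal ENNReal.one_ne_top hpt).2 hp
    generalize p.toReal = q at hq
    have hq0 : 0 < q := by linarith
    have hsum : ∑' k : ℤ, (∑' j : ℕ, w j * y (k - j)) ^ q
        ≤ (∑' j, w j) ^ q * ∑' k, y k ^ q := by
      calc ∑' k : ℤ, (∑' j : ℕ, w j * y (k - j)) ^ q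
          ≤ ∑' k : ℤ, (∑' j, w j) ^ (q - 1) * ∑' j : ℕ, w j * y (k - j) ^ q :=
            ENNReal.tsum_le_tsum fun k => ENNReal.tsum_mul_rpow_le hq w _
        _ = (∑' j, w j) ^ (q - 1) * ∑' j : ℕ, ∑' k : ℤ, w j * y (k - j) ^ q := by
            rw [ENNReal.tsum_mul_left, ENNReal.tsum_comm]
        _ = (∑' j, w j) ^ (q - 1) * ((∑' j, w j) * ∑' k, y k ^ q) := by
            congr 1
            rw [← ENNReal.tsum_mul_right]
            refine tsum_congr fun j => ?_
            rw [ENNReal.tsum_mul_left]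
            congr 1
            exact (Equiv.subRight (j : ℤ)).tsum_eq fun k => y k ^ q
        _ = (∑' j, w j) ^ q * ∑' k, y k ^ q := by
            rw [← mul_assoc]
            congr 1
            nth_rewrite 2 [← ENNReal.rpow_one (∑' j, w j)]
            rw [← ENNReal.rpow_add_of_nonneg _ _ (by linarith) zero_le_one, sub_add_cancel]
    calc (∑' k : ℤ, (∑' j : ℕ, w j * y (k - j)) ^ q) ^ (1 / q)
        ≤ ((∑' j, w j) ^ q * ∑' k, y k ^ q) ^ (1 / q) :=
          ENNReal.rpow_le_rpow hsum (by positivity)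
      _ = (∑' j, w j) * (∑' k, y k ^ q) ^ (1 / q) := by
          rw [ENNReal.mul_rpow_of_nonneg _ _ (by positivity), one_div,
            ENNReal.rpow_rpow_inv hq0.ne']

theorem tsum_int_le_eq_tsum_nat (k : ℤ) (f : ℤ → ℝ≥0∞) :
    ∑' m : {m : ℤ // m ≤ k}, f m = ∑' j : ℕ, f (k - j) := by
  let e : ℕ ≃ {m : ℤ // m ≤ k} :=
    { toFun := fun j => ⟨k - j, by omega⟩
      invFun := fun m => (k - m).toNat
      left_inv := fun j => by simp
      right_inv := fun m => by
        have := m.2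
        ext
        simp only
        omega }
  exact (e.tsum_eq fun m : {m : ℤ // m ≤ k} => f m).symm

theorem le_pow_mul_of_succ_le_mul {σ : ℤ → ℝ} {r : ℝ} (hr : 0 ≤ r)
    (h : ∀ k, σ (k + 1) ≤ r * σ k) (k : ℤ) (j : ℕ) : σ k ≤ r ^ j * σ (k - j) := by
  induction j with
  | zero => simp
  | succ j ih =>
    refine ih.trans ?_
    have hstep := h (k - (j + 1 : ℕ))
    rw [show k - ((j + 1 : ℕ) : ℤ) + 1 = k - j by push_cast; ring] at hstep
    rw [pow_succ, mul_assoc]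
    exact mul_le_mul_of_nonneg_left hstep (pow_nonneg hr j)

theorem discrete_hardy_below (p : ℝ≥0∞) (hp : 1 ≤ p) (r : ℝ) (hr0 : 0 < r) (hr1 : r < 1) :
    ∃ C > (0:ℝ), ∀ (σ : ℤ → ℝ) (x : ℤ → ℝ),
      (∀ k, 0 < σ k) → (∀ k, σ (k + 1) ≤ r * σ k) → (∀ k, 0 ≤ x k) →
      zlpNorm p (fun k => ENNReal.ofReal (σ k) * ∑' m : {m : ℤ // m ≤ k}, ENNReal.ofReal (x m))
          ≤ ENNReal.ofReal C * zlpNorm p (fun k => ENNReal.ofReal (σ k * x k)) ∧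
      zlpNorm p (fun k => ENNReal.ofReal (σ k * x k))
          ≤ zlpNorm p (fun k => ENNReal.ofReal (σ k) *
              ∑' m : {m : ℤ // m ≤ k}, ENNReal.ofReal (x m)) := by
  refine ⟨(1 - r)⁻¹, inv_pos.2 (sub_pos.2 hr1), fun σ x hσ hstep hx => ⟨?_, ?_⟩⟩
  · have hgeom : ∑' j : ℕ, ENNReal.ofReal (r ^ j) = ENNReal.ofReal (1 - r)⁻¹ := by
      rw [← ENNReal.ofReal_tsum_of_nonneg (fun j => pow_nonneg hr0.le j)
        (summable_geometric_of_lt_one hr0.le hr1), tsum_geometric_of_lt_one hr0.le hr1]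
    rw [← hgeom]
    refine le_trans (zlpNorm_mono fun k => ?_) (zlpNorm_tsum_mul_shift_le hp _ _)
    rw [tsum_int_le_eq_tsum_nat k fun m => ENNReal.ofReal (x m), ← ENNReal.tsum_mul_left]
    refine ENNReal.tsum_le_tsum fun j => ?_
    rw [← ENNReal.ofReal_mul (hσ k).le, ← ENNReal.ofReal_mul (pow_nonneg hr0.le j), ← mul_assoc]
    exact ENNReal.ofReal_le_ofReal
      (mul_le_mul_of_nonneg_right (le_pow_mul_of_succ_le_mul hr0.le hstep k j) (hx _))
  · refine zlpNorm_mono fun k => ?_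
    rw [ENNReal.ofReal_mul (hσ k).le]
    gcongr
    exact ENNReal.le_tsum (f := fun m : {m : ℤ // m ≤ k} => ENNReal.ofReal (x m)) ⟨k, le_rfl⟩
end

section
/- Let b ∈ SV satisfy b(t²) ∼ b(t) on (0,∞), with associated functions B₀ and B∞. Assume there exist real numbers α < 0 < β and the function u ↦ u^{−α}·B₀(u) is almost decreasing on (0,1] while u ↦ u^{−β}·B∞(u) is almost increasing on (0,1] (i.e. ρ_{B₀} < 0 < π_{B∞}). Then there exists a function Φ:(0,∞)→(0,∞) with Φ ∼ b such that sup_{k∈ℤ} Φ(λ_{k+1})/Φ(λ_k) < 1. -/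
open Set MeasureTheory Real

/-- `f ∼ g` on `S`: there are `c, C > 0` with `c * g x ≤ f x ≤ C * g x` for all `x ∈ S`. -/
def EquivOn (f g : ℝ → ℝ) (S : Set ℝ) : Prop :=
  ∃ c > (0:ℝ), ∃ C > (0:ℝ), ∀ x ∈ S, c * g x ≤ f x ∧ f x ≤ C * g x

/-- The associated function `B₀(u) = b(e^{1 - 1/u})`. -/
noncomputable def assocB0 (b : ℝ → ℝ) (u : ℝ) : ℝ := b (Real.exp (1 - 1 / u))

/-- The associated function `B∞(u) = b(e^{1/u - 1})`. -/
noncomputable def assocBinf (b : ℝ → ℝ) (u : ℝ) : ℝ := b (Real.exp (1 / u - 1))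

/-- `ℓ(t) = 1 + |log t|`. -/
noncomputable def ell (t : ℝ) : ℝ := 1 + |Real.log t|

/-- The sequence `λ_k`: `λ_k = e^{1 - e^{-k}}` for `k ≤ -1` and `λ_k = e^{e^k - 1}` for `k ≥ 0`. -/
noncomputable def lam (k : ℤ) : ℝ :=
  if k < 0 then Real.exp (1 - Real.exp (-(k : ℝ))) else Real.exp (Real.exp (k : ℝ) - 1)

/-- Lowering the exponent of a monotone weight preserves almost monotonicity. -/
lemma AlmostDecreasingOn.rpow_mul_of_le {L b : ℝ → ℝ} {S : Set ℝ} {p q : ℝ} (hqp : q ≤ p)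
    (hL : ∀ t ∈ S, 0 < L t) (hmono : MonotoneOn L S) (hb : ∀ t ∈ S, 0 < b t)
    (h : AlmostDecreasingOn (fun t => L t ^ p * b t) S) :
    AlmostDecreasingOn (fun t => L t ^ q * b t) S := by
  obtain ⟨C, hC, h⟩ := h
  refine ⟨C, hC, fun s hs t ht hst => ?_⟩
  have split : ∀ x ∈ S, L x ^ q * b x = L x ^ (q - p) * (L x ^ p * b x) := fun x hx => by
    rw [← mul_assoc, ← Real.rpow_add (hL x hx), sub_add_cancel]
  have hbt := hb t ht
  have hLt := hL t ht
  have hLs := hL s hs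
  calc L t ^ q * b t = L t ^ (q - p) * (L t ^ p * b t) := split t ht
    _ ≤ L s ^ (q - p) * (C * (L s ^ p * b s)) :=
        mul_le_mul (Real.rpow_le_rpow_of_nonpos hLs (hmono hs ht hst) (by linarith))
          (h s hs t ht hst) (by positivity) (by positivity)
    _ = C * (L s ^ q * b s) := by rw [split s hs]; ring

/-- Almost decreasing functions can be glued along a common end point. -/
lemma AlmostDecreasingOn.glue {f : ℝ → ℝ} {a c : ℝ} (hac : a < c) (hf : ∀ t ∈ Ioi a, 0 < f t)
    (h₁ : AlmostDecreasingOn f (Ioc a c)) (h₂ : AlmostDecreasingOn f (Ici c)) :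
    AlmostDecreasingOn f (Ioi a) := by
  obtain ⟨C, hC, h₁⟩ := h₁
  obtain ⟨D, hD, h₂⟩ := h₂
  have enlarge : ∀ {E x y : ℝ}, y ≤ E * x → E ≤ C + D + D * C → 0 < x → y ≤ (C + D + D * C) * x :=
    fun h hE hx => h.trans (mul_le_mul_of_nonneg_right hE hx.le)
  have hDC : 0 < D * C := mul_pos hD hC
  refine ⟨C + D + D * C, by positivity, fun s hs t ht hst => ?_⟩
  rcases le_total t c with htc | hct
  · exact enlarge (h₁ s ⟨hs, hst.trans htc⟩ t ⟨ht, htc⟩ hst) (by linarith) (hf s hs)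
  rcases le_total s c with hsc | hcs
  · refine enlarge (E := D * C) ?_ (by linarith) (hf s hs)
    calc f t ≤ D * f c := h₂ c self_mem_Ici t hct hct
      _ ≤ D * (C * f s) :=
          mul_le_mul_of_nonneg_left (h₁ s ⟨hs, hsc⟩ c ⟨hac, le_rfl⟩ hsc) hD.le
      _ = D * C * f s := by ring
  · exact enlarge (h₂ s hcs t hct hst) (by linarith) (hf s hs)

/-- An almost decreasing positive function is equivalent to its least decreasing majorant. -/
lemma AlmostDecreasingOn.exists_antitoneOn_equivOn {f : ℝ → ℝ} {a : ℝ}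
    (h : AlmostDecreasingOn f (Ioi a)) :
    ∃ g : ℝ → ℝ, AntitoneOn g (Ioi a) ∧ EquivOn g f (Ioi a) := by
  obtain ⟨C, hC, h⟩ := h
  have bound : ∀ t ∈ Ioi a, ∀ y ∈ f '' Ici t, y ≤ C * f t := by
    rintro t ht _ ⟨s, hs, rfl⟩
    exact h t ht s (mem_Ioi.2 (lt_of_lt_of_le (mem_Ioi.1 ht) hs)) hs
  refine ⟨fun t => sSup (f '' Ici t), fun s hs t _ hst => ?_, 1, one_pos, C, hC,
    fun t ht => ⟨?_, ?_⟩⟩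
  · exact csSup_le_csSup ⟨_, bound s hs⟩ (nonempty_Ici.image f) (image_mono (Ici_subset_Ici.2 hst))
  · rw [one_mul]
    exact le_csSup ⟨_, bound t ht⟩ (mem_image_of_mem f self_mem_Ici)
  · exact csSup_le (nonempty_Ici.image f) (bound t ht)

/-- The weight with `logWeight (lam k) = e ^ k`. -/
noncomputable def logWeight (t : ℝ) : ℝ :=
  if t ≤ 1 then 1 / (1 - Real.log t) else 1 + Real.log t

lemma logWeight_of_le_one {t : ℝ} (ht : t ≤ 1) : logWeight t = 1 / (1 - Real.log t) :=
  if_pos ht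

lemma logWeight_of_one_le {t : ℝ} (ht : 1 ≤ t) : logWeight t = 1 + Real.log t := by
  rcases ht.eq_or_lt with rfl | ht
  · simp [logWeight]
  · exact if_neg (not_le.2 ht)

lemma logWeight_mem_Ioc {t : ℝ} (ht : t ∈ Ioc (0 : ℝ) 1) : logWeight t ∈ Ioc (0 : ℝ) 1 := by
  have := Real.log_nonpos ht.1.le ht.2
  rw [logWeight_of_le_one ht.2]
  exact ⟨by apply one_div_pos.2; linarith, by rw [div_le_one] <;> linarith⟩

lemma one_le_logWeight {t : ℝ} (ht : 1 ≤ t) : 1 ≤ logWeight t := by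
  rw [logWeight_of_one_le ht]
  linarith [Real.log_nonneg ht]

lemma logWeight_pos {t : ℝ} (ht : 0 < t) : 0 < logWeight t := by
  rcases le_total t 1 with h | h
  · exact (logWeight_mem_Ioc ⟨ht, h⟩).1
  · linarith [one_le_logWeight h]

lemma monotoneOn_logWeight : MonotoneOn logWeight (Ioi 0) := by
  intro s hs t ht hst
  have hlog := Real.log_le_log hs hst
  rcases le_total t 1 with ht1 | ht1
  · have := Real.log_nonpos (le_of_lt ht) ht1
    rw [logWeight_of_le_one ht1, logWeight_of_le_one (hst.trans ht1)]
    exact one_div_le_one_div_of_le (by linarith) (by linarith)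
  rcases le_total s 1 with hs1 | hs1
  · exact (logWeight_mem_Ioc ⟨hs, hs1⟩).2.trans (one_le_logWeight ht1)
  · rw [logWeight_of_one_le ht1, logWeight_of_one_le hs1]
    linarith

lemma assocB0_logWeight (b : ℝ → ℝ) {t : ℝ} (ht : t ∈ Ioc (0 : ℝ) 1) :
    assocB0 b (logWeight t) = b t := by
  rw [assocB0, logWeight_of_le_one ht.2, one_div_one_div, sub_sub_cancel, Real.exp_log ht.1]

lemma assocBinf_inv_logWeight (b : ℝ → ℝ) {t : ℝ} (ht : 1 ≤ t) :
    assocBinf b (logWeight t)⁻¹ = b t := by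
  rw [assocBinf, logWeight_of_one_le ht, one_div, inv_inv, add_sub_cancel_left,
    Real.exp_log (by linarith)]

lemma lam_pos (k : ℤ) : 0 < lam k := by
  unfold lam
  split_ifs <;> positivity

lemma logWeight_lam (k : ℤ) : logWeight (lam k) = Real.exp k := by
  unfold lam
  split_ifs with hk
  · have hk' : (k : ℝ) < 0 := by exact_mod_cast hk
    have : 1 ≤ Real.exp (-(k : ℝ)) := Real.one_le_exp (by linarith)
    rw [logWeight_of_le_one (Real.exp_le_one_iff.2 (by linarith)), Real.log_exp, sub_sub_cancel,
      Real.exp_neg, one_div, inv_inv]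
  · have hk' : (0 : ℝ) ≤ k := by exact_mod_cast not_lt.1 hk
    have : 1 ≤ Real.exp (k : ℝ) := Real.one_le_exp hk'
    rw [logWeight_of_one_le (Real.one_le_exp (by linarith)), Real.log_exp, add_sub_cancel]

lemma lam_le_lam_succ (k : ℤ) : lam k ≤ lam (k + 1) := by
  by_contra! h
  have := monotoneOn_logWeight (lam_pos _) (lam_pos _) h.le
  rw [logWeight_lam, logWeight_lam, Real.exp_le_exp] at this
  push_cast at this
  linarith

/-- The growth conditions on both associated functions yield a common power of `logWeight` whose
product with `b` is almost decreasing. -/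
lemma almostDecreasingOn_logWeight_rpow_mul {b : ℝ → ℝ} (hb : ∀ t ∈ Ioi (0 : ℝ), 0 < b t)
    {α β : ℝ} (hB0 : AlmostDecreasingOn (fun u => u ^ (-α) * assocB0 b u) (Ioc 0 1))
    (hBinf : AlmostIncreasingOn (fun u => u ^ (-β) * assocBinf b u) (Ioc 0 1)) :
    AlmostDecreasingOn (fun t => logWeight t ^ min (-α) β * b t) (Ioi 0) := by
  have hIci : Ici (1 : ℝ) ⊆ Ioi 0 := fun t ht => mem_Ioi.2 (lt_of_lt_of_le one_pos ht)
  refine AlmostDecreasingOn.glue one_pos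
    (fun t ht => mul_pos (Real.rpow_pos_of_pos (logWeight_pos ht) _) (hb t ht)) ?_ ?_
  · refine AlmostDecreasingOn.rpow_mul_of_le (min_le_left _ _) (fun t ht => logWeight_pos ht.1)
      (monotoneOn_logWeight.mono Ioc_subset_Ioi_self) (fun t ht => hb t ht.1) ?_
    obtain ⟨C, hC, h⟩ := hB0
    refine ⟨C, hC, fun s hs t ht hst => ?_⟩
    have := h _ (logWeight_mem_Ioc hs) _ (logWeight_mem_Ioc ht)
      (monotoneOn_logWeight hs.1 ht.1 hst)
    simpa only [assocB0_logWeight b hs, assocB0_logWeight b ht] using this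
  · refine AlmostDecreasingOn.rpow_mul_of_le (min_le_right _ _)
      (fun t ht => logWeight_pos (hIci ht)) (monotoneOn_logWeight.mono hIci)
      (fun t ht => hb t (hIci ht)) ?_
    obtain ⟨C, hC, h⟩ := hBinf
    have inv_mem : ∀ x ∈ Ici (1 : ℝ), (logWeight x)⁻¹ ∈ Ioc (0 : ℝ) 1 := fun x hx =>
      ⟨inv_pos.2 (logWeight_pos (hIci hx)), inv_le_one_of_one_le₀ (one_le_logWeight hx)⟩
    have inv_rpow : ∀ x ∈ Ici (1 : ℝ), (logWeight x)⁻¹ ^ (-β) = logWeight x ^ β := fun x hx => by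
      rw [Real.inv_rpow (logWeight_pos (hIci hx)).le,
        Real.rpow_neg (logWeight_pos (hIci hx)).le, inv_inv]
    refine ⟨C, hC, fun s hs t ht hst => ?_⟩
    have := h _ (inv_mem t ht) _ (inv_mem s hs)
      (inv_anti₀ (logWeight_pos (hIci hs)) (monotoneOn_logWeight (hIci hs) (hIci ht) hst))
    simpa only [assocBinf_inv_logWeight b hs, assocBinf_inv_logWeight b ht, inv_rpow s hs,
      inv_rpow t ht] using this

theorem exists_decreasing_discretization (b : ℝ → ℝ) (hb : SlowlyVarying b)
    (hsq : EquivOn (fun t => b (t ^ 2)) b (Ioi 0))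
    (α β : ℝ) (hα : α < 0) (hβ : 0 < β)
    (hB0 : AlmostDecreasingOn (fun u => u ^ (-α) * assocB0 b u) (Ioc 0 1))
    (hBinf : AlmostIncreasingOn (fun u => u ^ (-β) * assocBinf b u) (Ioc 0 1)) :
    ∃ Φ : ℝ → ℝ, EquivOn Φ b (Ioi 0) ∧
      ∃ r < (1:ℝ), ∀ k : ℤ, Φ (lam (k + 1)) / Φ (lam k) ≤ r := by
  obtain ⟨-, hbpos, -⟩ := hb
  obtain ⟨g, hg, c, hc, C, hC, hgf⟩ :=
    (almostDecreasingOn_logWeight_rpow_mul hbpos hB0 hBinf).exists_antitoneOn_equivOn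
  set δ := min (-α) β
  have hδ : 0 < δ := lt_min (by linarith) hβ
  refine ⟨fun t => logWeight t ^ (-δ) * g t, ⟨c, hc, C, hC, fun t ht => ?_⟩,
    Real.exp (-δ), Real.exp_lt_one_iff.2 (by linarith), fun k => ?_⟩
  · have hw := Real.rpow_pos_of_pos (logWeight_pos ht) (-δ)
    have cancel : ∀ E : ℝ, E * b t = logWeight t ^ (-δ) * (E * (logWeight t ^ δ * b t)) := by
      intro E
      have : logWeight t ^ (-δ) * logWeight t ^ δ = 1 := by
        rw [← Real.rpow_add (logWeight_pos ht), neg_add_cancel, Real.rpow_zero]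
      linear_combination (-E * b t) * this
    rw [cancel c, cancel C]
    exact ⟨mul_le_mul_of_nonneg_left (hgf t ht).1 hw.le,
      mul_le_mul_of_nonneg_left (hgf t ht).2 hw.le⟩
  · have hgpos : 0 < g (lam k) :=
      (mul_pos hc (mul_pos (Real.rpow_pos_of_pos (logWeight_pos (lam_pos k)) δ)
        (hbpos _ (lam_pos k)))).trans_le (hgf _ (lam_pos k)).1
    simp only [logWeight_lam, ← Real.exp_mul]
    rw [div_le_iff₀ (mul_pos (Real.exp_pos _) hgpos), ← mul_assoc, ← Real.exp_add]
    have hexp : ((k + 1 : ℤ) : ℝ) * -δ = -δ + k * -δ := by push_cast; ring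
    rw [hexp]
    exact mul_le_mul_of_nonneg_left (hg (lam_pos _) (lam_pos _) (lam_le_lam_succ k))
      (Real.exp_pos _).le
end

section
/- Let 1 ≤ q < ∞ and let b ∈ SV satisfy b(t²) ∼ b(t) on (0,∞), with associated functions B₀ and B∞. Assume there exist real numbers γ < 1/q < δ such that u ↦ u^{−γ}·B∞(u) is almost decreasing on (0,1] and u ↦ u^{−δ}·B₀(u) is almost increasing on (0,1] (i.e. ρ_{B∞} < 1/q < π_{B₀}). Then (∫₀^t b(s)^q ds/s)^{1/q} ∼ b(t)·ℓ(t)^{1/q}, with equivalence constants independent of t > 0. -/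
open Set MeasureTheory Real

/-- Logarithmic change of variables for the measure `ds/s` on `(0,t)`. -/
theorem lintegral_Ioo_div_eq_lintegral_exp (f : ℝ → ℝ) {t : ℝ} (ht : 0 < t) :
    ∫⁻ s in Ioo (0:ℝ) t, ENNReal.ofReal (f s / s)
      = ∫⁻ x in Iio (Real.log t), ENNReal.ofReal (f (Real.exp x)) := by
  have himg : Real.exp '' Iio (Real.log t) = Ioo (0:ℝ) t := by
    ext s
    constructor
    · rintro ⟨x, hx, rfl⟩
      exact ⟨Real.exp_pos x, (Real.lt_log_iff_exp_lt ht).1 hx⟩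
    · rintro ⟨h0, h1⟩
      exact ⟨Real.log s, Real.log_lt_log h0 h1, Real.exp_log h0⟩
  rw [← himg, lintegral_image_eq_lintegral_abs_deriv_mul measurableSet_Iio
    (fun x _ => (Real.hasDerivAt_exp x).hasDerivWithinAt) Real.exp_injective.injOn]
  refine lintegral_congr fun x => ?_
  rw [← ENNReal.ofReal_mul (abs_nonneg _), abs_of_pos (Real.exp_pos x),
    mul_div_cancel₀ _ (Real.exp_pos x).ne']

theorem lintegral_Iio_one_sub_rpow {p y : ℝ} (hp : 1 < p) (hy : y ≤ 0) :
    ∫⁻ x in Iio y, ENNReal.ofReal ((1 - x) ^ (-p))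
      = ENNReal.ofReal ((1 - y) ^ (1 - p) / (p - 1)) := by
  have hpre : (fun x : ℝ => 1 - x) ⁻¹' Ioi (1 - y) = Iio y := by
    ext x; simp
  rw [← hpre, (volume.measurePreserving_sub_left (1:ℝ)).setLIntegral_comp_preimage_emb
    (MeasurableEquiv.subLeft (1:ℝ)).measurableEmbedding
    (fun z => ENNReal.ofReal (z ^ (-p))),
    ← ofReal_integral_eq_lintegral_ofReal
      (integrableOn_Ioi_rpow_of_lt (by linarith) (by linarith)),
    integral_Ioi_rpow_of_lt (by linarith) (by linarith)]
  · rw [show -p + 1 = -(p - 1) by ring, neg_div_neg_eq, neg_sub]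
  · filter_upwards [ae_restrict_mem measurableSet_Ioi] with z hz
    exact rpow_nonneg (by linarith [mem_Ioi.1 hz]) _

theorem lintegral_Ico_one_add_rpow_le {p y : ℝ} (hp : p < 1) (hy : 0 ≤ y) :
    ∫⁻ x in Ico 0 y, ENNReal.ofReal ((1 + x) ^ (-p))
      ≤ ENNReal.ofReal ((1 + y) ^ (1 - p) / (1 - p)) := by
  have hcont : ContinuousOn (fun x : ℝ => (1 + x) ^ (-p)) (Icc 0 y) :=
    ContinuousOn.rpow_const (by fun_prop) fun x hx => Or.inl (by linarith [hx.1])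
  rw [restrict_Ico_eq_restrict_Ioc, ← ofReal_integral_eq_lintegral_ofReal
    (hcont.integrableOn_Icc.mono_set Ioc_subset_Icc_self),
    ← intervalIntegral.integral_of_le hy,
    intervalIntegral.integral_comp_add_left (fun z : ℝ => z ^ (-p)),
    integral_rpow (Or.inl (by linarith))]
  · refine ENNReal.ofReal_le_ofReal ?_
    rw [show -p + 1 = 1 - p by ring]
    refine div_le_div_of_nonneg_right ?_ (by linarith)
    simp
  · filter_upwards [ae_restrict_mem measurableSet_Ioc] with z hz
    exact rpow_nonneg (by linarith [hz.1]) _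

theorem AlmostIncreasingOn.assocB0_exp {b : ℝ → ℝ} {δ : ℝ}
    (h : AlmostIncreasingOn (fun u => u ^ (-δ) * assocB0 b u) (Ioc 0 1)) :
    ∃ C > (0:ℝ), ∀ x y : ℝ, x ≤ y → y ≤ 0 →
      (1 - x) ^ δ * b (Real.exp x) ≤ C * ((1 - y) ^ δ * b (Real.exp y)) := by
  obtain ⟨C, hC, h⟩ := h
  have key : ∀ x ≤ (0:ℝ), ((1 - x)⁻¹) ^ (-δ) * assocB0 b ((1 - x)⁻¹)
      = (1 - x) ^ δ * b (Real.exp x) := fun x hx => by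
    rw [assocB0, one_div, inv_inv, sub_sub_cancel, rpow_neg (by simp; linarith),
      inv_rpow (by linarith), inv_inv]
  have mem : ∀ x ≤ (0:ℝ), (1 - x)⁻¹ ∈ Ioc (0:ℝ) 1 := fun x hx =>
    ⟨inv_pos.2 (by linarith), inv_le_one_of_one_le₀ (by linarith)⟩
  refine ⟨C, hC, fun x y hxy hy => ?_⟩
  have hx := hxy.trans hy
  have := h _ (mem x hx) _ (mem y hy) (inv_anti₀ (by linarith) (by linarith))
  simpa only [key x hx, key y hy] using this

theorem AlmostDecreasingOn.assocBinf_exp {b : ℝ → ℝ} {γ : ℝ}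
    (h : AlmostDecreasingOn (fun u => u ^ (-γ) * assocBinf b u) (Ioc 0 1)) :
    ∃ C > (0:ℝ), ∀ x y : ℝ, 0 ≤ x → x ≤ y →
      (1 + x) ^ γ * b (Real.exp x) ≤ C * ((1 + y) ^ γ * b (Real.exp y)) := by
  obtain ⟨C, hC, h⟩ := h
  have key : ∀ x : ℝ, 0 ≤ x → ((1 + x)⁻¹) ^ (-γ) * assocBinf b ((1 + x)⁻¹)
      = (1 + x) ^ γ * b (Real.exp x) := fun x hx => by
    rw [assocBinf, one_div, inv_inv, add_sub_cancel_left, rpow_neg (by positivity),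
      inv_rpow (by linarith), inv_inv]
  have mem : ∀ x : ℝ, 0 ≤ x → (1 + x)⁻¹ ∈ Ioc (0:ℝ) 1 := fun x hx =>
    ⟨inv_pos.2 (by linarith), inv_le_one_of_one_le₀ (by linarith)⟩
  refine ⟨C, hC, fun x y hx hxy => ?_⟩
  have hy := hx.trans hxy
  have := h _ (mem y hy) _ (mem x hx) (inv_anti₀ (by linarith) (by linarith))
  simpa only [key x hx, key y hy] using this

theorem SlowlyVarying.exists_mul_le_exp {b : ℝ → ℝ} (hb : SlowlyVarying b) :
    ∃ k > (0:ℝ), ∀ x y : ℝ, x ≤ y → y ≤ x + 1 → k * b (Real.exp y) ≤ b (Real.exp x) := by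
  obtain ⟨C, hC, h⟩ := (hb.2.2 1 one_pos).2
  refine ⟨(C * Real.exp 1)⁻¹, by positivity, fun x y hxy hyx => ?_⟩
  have h1 := h _ (mem_Ioi.2 (Real.exp_pos x)) _ (mem_Ioi.2 (Real.exp_pos y))
    (Real.exp_le_exp.2 hxy)
  simp only [rpow_neg_one, ← Real.exp_neg] at h1
  have hbx := hb.2.1 _ (Real.exp_pos x)
  rw [inv_mul_le_iff₀ (by positivity)]
  have h2 := mul_le_mul_of_nonneg_left h1 (Real.exp_pos y).le
  rw [← mul_assoc, ← Real.exp_add, add_neg_cancel, Real.exp_zero, one_mul] at h2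
  calc b (Real.exp y) ≤ C * Real.exp (y - x) * b (Real.exp x) := by
        rw [sub_eq_add_neg, Real.exp_add]; linarith
    _ ≤ _ := by gcongr; linarith

/-- On a logarithmic interval of length comparable to `1 + |y|` to the left of `y`, the function
`x ↦ b(e^x)` is bounded below by a multiple of `b(e^y)`. -/
theorem SlowlyVarying.exists_mul_le_exp_of_assoc {b : ℝ → ℝ} {γ δ : ℝ} (hb : SlowlyVarying b)
    (hsq : EquivOn (fun t => b (t ^ 2)) b (Ioi 0)) (hδ : 0 ≤ δ)
    (hBinf : AlmostDecreasingOn (fun u => u ^ (-γ) * assocBinf b u) (Ioc 0 1))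
    (hB0 : AlmostIncreasingOn (fun u => u ^ (-δ) * assocB0 b u) (Ioc 0 1)) :
    ∃ k > (0:ℝ), ∀ x y : ℝ, x ≤ y → y ≤ x + (1 + |y|) / 3 →
      k * b (Real.exp y) ≤ b (Real.exp x) := by
  obtain ⟨k₁, hk₁, h₁⟩ := hb.exists_mul_le_exp
  obtain ⟨A, hA, hneg⟩ := hB0.assocB0_exp
  obtain ⟨D, hD, hpos⟩ := hBinf.assocBinf_exp
  obtain ⟨c, hc, C, hC, hcC⟩ := hsq
  have hb0 : ∀ x, 0 < b (Real.exp x) := fun x => hb.2.1 _ (Real.exp_pos x)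
  have hdouble : ∀ x, c * b (Real.exp x) ≤ b (Real.exp (2 * x)) ∧
      b (Real.exp (2 * x)) ≤ C * b (Real.exp x) := fun x => by
    have := hcC _ (mem_Ioi.2 (Real.exp_pos x))
    simpa only [← Real.exp_nat_mul, Nat.cast_ofNat] using this
  have key : ∀ k ∈ ({k₁, c / A, (C * D * 2 ^ |γ|)⁻¹} : Set ℝ), ∀ y,
      min k₁ (min (c / A) (C * D * 2 ^ |γ|)⁻¹) * b (Real.exp y) ≤ k * b (Real.exp y) := by
    intro k hk y
    refine mul_le_mul_of_nonneg_right ?_ (hb0 y).le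
    rcases hk with rfl | rfl | rfl <;> simp
  refine ⟨min k₁ (min (c / A) (C * D * 2 ^ |γ|)⁻¹), by positivity, fun x y hxy hyx => ?_⟩
  rcases le_total |y| 2 with hy2 | hy2
  · exact (key k₁ (by simp) y).trans (h₁ x y hxy (by linarith))
  rcases le_total y 0 with hy | hy
  · refine (key (c / A) (by simp) y).trans ?_
    rw [abs_of_nonpos hy] at hyx hy2
    have h2 := hneg (2 * y) x (by linarith) (by linarith)
    have h3 : (1 - x) ^ δ ≤ (1 - 2 * y) ^ δ :=
      rpow_le_rpow (by linarith) (by linarith) hδ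
    have h4 : 0 < (1 - x) ^ δ := rpow_pos_of_pos (by linarith) _
    have h5 : b (Real.exp (2 * y)) ≤ A * b (Real.exp x) := by
      refine le_of_mul_le_mul_left ?_ h4
      calc _ ≤ (1 - 2 * y) ^ δ * b (Real.exp (2 * y)) := by gcongr; exact (hb0 _).le
        _ ≤ _ := by linarith
    rw [div_mul_eq_mul_div, div_le_iff₀ hA]
    linarith [(hdouble y).1]
  · refine (key (C * D * 2 ^ |γ|)⁻¹ (by simp) y).trans ?_
    rw [abs_of_nonneg hy] at hyx hy2
    have h2 := hpos (y / 2) x (by linarith) (by linarith)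
    have h3 : (1 + x) ^ γ ≤ 2 ^ |γ| * (1 + y / 2) ^ γ := by
      rw [← div_le_iff₀ (by positivity), ← div_rpow (by linarith) (by linarith)]
      have hr1 : 1 ≤ (1 + x) / (1 + y / 2) := by
        rw [one_le_div (by linarith)]; linarith
      have hr2 : (1 + x) / (1 + y / 2) ≤ 2 := by
        rw [div_le_iff₀ (by linarith)]; linarith
      exact (rpow_le_rpow_of_exponent_le hr1 (le_abs_self γ)).trans
        (rpow_le_rpow (by linarith) hr2 (abs_nonneg γ))
    have h4 : 0 < (1 + y / 2) ^ γ := rpow_pos_of_pos (by linarith) _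
    have h5 : b (Real.exp (y / 2)) ≤ D * 2 ^ |γ| * b (Real.exp x) := by
      refine le_of_mul_le_mul_left ?_ h4
      calc _ ≤ D * ((1 + x) ^ γ * b (Real.exp x)) := h2
        _ ≤ D * ((2 ^ |γ| * (1 + y / 2) ^ γ) * b (Real.exp x)) := by
          gcongr; exact (hb0 _).le
        _ = _ := by ring
    have h6 := (hdouble (y / 2)).2
    rw [mul_div_cancel₀ _ (two_ne_zero' ℝ)] at h6
    rw [inv_mul_le_iff₀ (by positivity)]
    calc _ ≤ C * b (Real.exp (y / 2)) := h6
      _ ≤ C * (D * 2 ^ |γ| * b (Real.exp x)) := by gcongr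
      _ = _ := by ring

theorem rpow_le_of_weighted_le {v w f g C a q : ℝ} (hv : 0 < v) (hw : 0 < w) (hf : 0 ≤ f)
    (hg : 0 ≤ g) (hC : 0 ≤ C) (hq : 0 ≤ q) (h : v ^ a * f ≤ C * (w ^ a * g)) :
    f ^ q ≤ C ^ q * w ^ (a * q) * g ^ q * v ^ (-(a * q)) := by
  have h1 := rpow_le_rpow (by positivity) h hq
  rw [mul_rpow (by positivity) hf, mul_rpow hC (by positivity), mul_rpow (by positivity) hg,
    ← rpow_mul hv.le, ← rpow_mul hw.le] at h1
  rw [rpow_neg hv.le, ← div_eq_mul_inv, le_div_iff₀ (by positivity)]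
  linarith

theorem lintegral_Iio_le_of_weighted_le {β : ℝ → ℝ} {A δ q : ℝ} (hβ : ∀ x, 0 < β x) (hA : 0 < A)
    (hq : 0 < q) (hδ : 1 < δ * q)
    (h : ∀ x y : ℝ, x ≤ y → y ≤ 0 → (1 - x) ^ δ * β x ≤ A * ((1 - y) ^ δ * β y))
    {y : ℝ} (hy : y ≤ 0) :
    ∫⁻ x in Iio y, ENNReal.ofReal (β x ^ q)
      ≤ ENNReal.ofReal (A ^ q / (δ * q - 1) * (β y ^ q * (1 - y))) := by
  have hy1 : 0 < 1 - y := by linarith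
  have hβy := hβ y
  set M := A ^ q * (1 - y) ^ (δ * q) * β y ^ q
  have hM : 0 ≤ M := by positivity
  calc ∫⁻ x in Iio y, ENNReal.ofReal (β x ^ q)
      ≤ ∫⁻ x in Iio y, ENNReal.ofReal M * ENNReal.ofReal ((1 - x) ^ (-(δ * q))) := by
        refine setLIntegral_mono' measurableSet_Iio fun x hx => ?_
        rw [← ENNReal.ofReal_mul hM]
        have hx' := mem_Iio.1 hx
        exact ENNReal.ofReal_le_ofReal (rpow_le_of_weighted_le (by linarith) hy1 (hβ x).le
          (hβ y).le hA.le hq.le (h x y hx'.le hy))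
    _ = ENNReal.ofReal (M * ((1 - y) ^ (1 - δ * q) / (δ * q - 1))) := by
        rw [lintegral_const_mul' _ _ ENNReal.ofReal_ne_top, lintegral_Iio_one_sub_rpow hδ hy,
          ENNReal.ofReal_mul hM]
    _ = _ := by
        congr 1
        have : (1 - y) ^ (δ * q) * (1 - y) ^ (1 - δ * q) = 1 - y := by
          rw [← rpow_add hy1, add_sub_cancel, rpow_one]
        calc _ = A ^ q / (δ * q - 1) * (β y ^ q * ((1 - y) ^ (δ * q) * (1 - y) ^ (1 - δ * q))) := by
              simp only [M]; ring
          _ = _ := by rw [this]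

theorem lintegral_Ico_le_of_weighted_le {β : ℝ → ℝ} {D γ q : ℝ} (hβ : ∀ x, 0 < β x) (hD : 0 < D)
    (hq : 0 < q) (hγ : γ * q < 1)
    (h : ∀ x y : ℝ, 0 ≤ x → x ≤ y → (1 + x) ^ γ * β x ≤ D * ((1 + y) ^ γ * β y))
    {y : ℝ} (hy : 0 ≤ y) :
    ∫⁻ x in Ico 0 y, ENNReal.ofReal (β x ^ q)
      ≤ ENNReal.ofReal (D ^ q / (1 - γ * q) * (β y ^ q * (1 + y))) := by
  have hy1 : 0 < 1 + y := by linarith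
  have hβy := hβ y
  set M := D ^ q * (1 + y) ^ (γ * q) * β y ^ q
  have hM : 0 ≤ M := by positivity
  calc ∫⁻ x in Ico 0 y, ENNReal.ofReal (β x ^ q)
      ≤ ∫⁻ x in Ico 0 y, ENNReal.ofReal M * ENNReal.ofReal ((1 + x) ^ (-(γ * q))) := by
        refine setLIntegral_mono' measurableSet_Ico fun x hx => ?_
        rw [← ENNReal.ofReal_mul hM]
        exact ENNReal.ofReal_le_ofReal (rpow_le_of_weighted_le (by linarith [hx.1]) hy1 (hβ x).le
          (hβ y).le hD.le hq.le (h x y hx.1 hx.2.le))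
    _ ≤ ENNReal.ofReal (M * ((1 + y) ^ (1 - γ * q) / (1 - γ * q))) := by
        rw [lintegral_const_mul' _ _ ENNReal.ofReal_ne_top, ENNReal.ofReal_mul hM]
        gcongr
        exact lintegral_Ico_one_add_rpow_le hγ hy
    _ = _ := by
        congr 1
        have : (1 + y) ^ (γ * q) * (1 + y) ^ (1 - γ * q) = 1 + y := by
          rw [← rpow_add hy1, add_sub_cancel, rpow_one]
        calc _ = D ^ q / (1 - γ * q) * (β y ^ q * ((1 + y) ^ (γ * q) * (1 + y) ^ (1 - γ * q))) := by
              simp only [M]; ring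
          _ = _ := by rw [this]

theorem exists_lintegral_Iio_le {β : ℝ → ℝ} {A D γ δ q : ℝ} (hβ : ∀ x, 0 < β x) (hA : 0 < A)
    (hD : 0 < D) (hq : 0 < q) (hγ : γ * q < 1) (hδ : 1 < δ * q)
    (hneg : ∀ x y : ℝ, x ≤ y → y ≤ 0 → (1 - x) ^ δ * β x ≤ A * ((1 - y) ^ δ * β y))
    (hpos : ∀ x y : ℝ, 0 ≤ x → x ≤ y → (1 + x) ^ γ * β x ≤ D * ((1 + y) ^ γ * β y)) :
    ∃ K > (0:ℝ), ∀ y : ℝ, ∫⁻ x in Iio y, ENNReal.ofReal (β x ^ q)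
      ≤ ENNReal.ofReal (K * (β y ^ q * (1 + |y|))) := by
  have hδ' : 0 < δ * q - 1 := by linarith
  have hγ' : 0 < 1 - γ * q := by linarith
  set K₁ := A ^ q / (δ * q - 1)
  set K₂ := D ^ q / (1 - γ * q)
  have hK₁ : 0 < K₁ := by positivity
  have hK₂ : 0 < K₂ := by positivity
  refine ⟨K₁ + (K₁ * D ^ q + K₂), by positivity, fun y => ?_⟩
  have hβy := hβ y
  rcases le_total y 0 with hy | hy
  · refine (lintegral_Iio_le_of_weighted_le hβ hA hq hδ hneg hy).trans
      (ENNReal.ofReal_le_ofReal ?_)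
    rw [abs_of_nonpos hy, ← sub_eq_add_neg]
    have : 0 < 1 - y := by linarith
    gcongr
    exact le_add_of_nonneg_right (by positivity)
  · rw [abs_of_nonneg hy, ← Iio_union_Ico_eq_Iio hy]
    refine (lintegral_union_le _ _ _).trans ((add_le_add
      (lintegral_Iio_le_of_weighted_le hβ hA hq hδ hneg le_rfl)
      (lintegral_Ico_le_of_weighted_le hβ hD hq hγ hpos hy)).trans ?_)
    have hβ0 := hβ 0
    rw [← ENNReal.ofReal_add (by simp only [sub_zero]; positivity) (by positivity)]
    refine ENNReal.ofReal_le_ofReal ?_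
    have h0 : β 0 ^ q ≤ D ^ q * (β y ^ q * (1 + y)) := by
      have h1 := rpow_le_of_weighted_le (by linarith) (by linarith) hβ0.le hβy.le hD.le hq.le
        (hpos 0 y le_rfl hy)
      have h2 : (1 + y) ^ (γ * q) ≤ 1 + y := by
        simpa using rpow_le_rpow_of_exponent_le (by linarith : 1 ≤ 1 + y) hγ.le
      rw [add_zero, one_rpow, mul_one] at h1
      calc _ ≤ _ := h1
        _ ≤ D ^ q * (1 + y) * β y ^ q := by gcongr
        _ = _ := by ring
    have h3 := mul_le_mul_of_nonneg_left h0 hK₁.le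
    have h4 : 0 ≤ K₁ * (β y ^ q * (1 + y)) := by positivity
    change K₁ * (β 0 ^ q * (1 - 0)) + K₂ * (β y ^ q * (1 + y)) ≤ _
    linarith

theorem limiting_Lq_norm_near_zero (q : ℝ) (hq : 1 ≤ q) (b : ℝ → ℝ)
    (hb : SlowlyVarying b) (hsq : EquivOn (fun t => b (t ^ 2)) b (Ioi 0))
    (γ δ : ℝ) (hγ : γ < 1 / q) (hδ : 1 / q < δ)
    (hBinf : AlmostDecreasingOn (fun u => u ^ (-γ) * assocBinf b u) (Ioc 0 1))
    (hB0 : AlmostIncreasingOn (fun u => u ^ (-δ) * assocB0 b u) (Ioc 0 1)) :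
    ∃ c > (0:ℝ), ∃ C > (0:ℝ), ∀ t > (0:ℝ),
      ENNReal.ofReal (c * (b t * ell t ^ (1 / q)))
          ≤ (∫⁻ s in Ioo (0:ℝ) t, ENNReal.ofReal (b s ^ q / s)) ^ (1 / q) ∧
      (∫⁻ s in Ioo (0:ℝ) t, ENNReal.ofReal (b s ^ q / s)) ^ (1 / q)
          ≤ ENNReal.ofReal (C * (b t * ell t ^ (1 / q))) := by
  have hq0 : 0 < q := by linarith
  have hq' : 0 < 1 / q := by positivity
  obtain ⟨k, hk, hlow⟩ := hb.exists_mul_le_exp_of_assoc hsq (hq'.trans hδ).le hBinf hB0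
  obtain ⟨A, hA, hneg⟩ := hB0.assocB0_exp
  obtain ⟨D, hD, hpos⟩ := hBinf.assocBinf_exp
  obtain ⟨K, hK, hup⟩ := exists_lintegral_Iio_le (β := fun x => b (Real.exp x))
    (fun x => hb.2.1 _ (Real.exp_pos x)) hA hD hq0 ((lt_div_iff₀ hq0).1 hγ)
    ((div_lt_iff₀ hq0).1 hδ) hneg hpos
  have hroot : ∀ M > (0:ℝ), ∀ t > (0:ℝ), ENNReal.ofReal (M ^ (1 / q) * (b t * ell t ^ (1 / q)))
      = ENNReal.ofReal (M * (b t ^ q * ell t)) ^ (1 / q) := fun M hM t ht => by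
    have hbt := hb.2.1 t ht
    have hl : 0 < ell t := by unfold ell; positivity
    rw [ENNReal.ofReal_rpow_of_nonneg (by positivity) hq'.le, mul_rpow hM.le (by positivity),
      mul_rpow (by positivity) hl.le, ← rpow_mul hbt.le, mul_one_div_cancel hq0.ne', rpow_one]
  refine ⟨(k ^ q / 3) ^ (1 / q), by positivity, K ^ (1 / q), by positivity, fun t ht => ?_⟩
  rw [hroot _ (by positivity) t ht, hroot _ hK t ht,
    lintegral_Ioo_div_eq_lintegral_exp (fun s => b s ^ q) ht]
  have hbt := hb.2.1 t ht
  constructor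
  · refine ENNReal.rpow_le_rpow ?_ hq'.le
    set y := Real.log t
    have hey : Real.exp y = t := Real.exp_log ht
    calc ENNReal.ofReal (k ^ q / 3 * (b t ^ q * ell t))
        = ENNReal.ofReal ((k * b t) ^ q) * volume (Ioo (y - (1 + |y|) / 3) y) := by
          rw [Real.volume_Ioo, ← ENNReal.ofReal_mul (by positivity),
            mul_rpow hk.le hbt.le, ell]
          congr 1
          ring
      _ = ∫⁻ _ in Ioo (y - (1 + |y|) / 3) y, ENNReal.ofReal ((k * b t) ^ q) :=
          (setLIntegral_const _ _).symm
      _ ≤ ∫⁻ x in Ioo (y - (1 + |y|) / 3) y, ENNReal.ofReal (b (Real.exp x) ^ q) := by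
          refine setLIntegral_mono' measurableSet_Ioo fun x hx => ENNReal.ofReal_le_ofReal ?_
          refine rpow_le_rpow (by positivity) ?_ hq0.le
          rw [← hey]
          exact hlow x y hx.2.le (by linarith [hx.1])
      _ ≤ _ := lintegral_mono_set Ioo_subset_Iio_self
  · refine ENNReal.rpow_le_rpow ?_ hq'.le
    simpa only [ell, Real.exp_log ht] using hup (Real.log t)
end

section
/- Let 1 ≤ q < ∞ and let b ∈ SV satisfy b(t²) ∼ b(t) on (0,∞), with associated functions B₀ and B∞. Assume there exist real numbers γ < 1/q < δ such that u ↦ u^{−γ}·B₀(u) is almost decreasing on (0,1] and u ↦ u^{−δ}·B∞(u) is almost increasing on (0,1] (i.e. ρ_{B₀} < 1/q < π_{B∞}). Then (∫_t^∞ b(s)^q ds/s)^{1/q} ∼ b(t)·ℓ(t)^{1/q}, with equivalence constants independent of t > 0. -/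
open Set MeasureTheory Real

lemma one_le_ell (t : ℝ) : 1 ≤ ell t := le_add_of_nonneg_right (abs_nonneg _)

lemma ell_pos (t : ℝ) : 0 < ell t := zero_lt_one.trans_le (one_le_ell t)

lemma ell_of_one_le {t : ℝ} (ht : 1 ≤ t) : ell t = 1 + log t := by
  rw [ell, abs_of_nonneg (log_nonneg ht)]

lemma ell_of_le_one {t : ℝ} (h0 : 0 < t) (ht : t ≤ 1) : ell t = 1 - log t := by
  rw [ell, abs_of_nonpos (log_nonpos h0.le ht)]
  ring

/-- The hypothesis on `B∞`, read off at the points `1 / ell s`. -/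
lemma AlmostIncreasingOn.ell_rpow_mul {b : ℝ → ℝ} {δ : ℝ}
    (h : AlmostIncreasingOn (fun u => u ^ (-δ) * assocBinf b u) (Ioc 0 1)) :
    ∃ C > (0 : ℝ), ∀ s r : ℝ, 1 ≤ s → s ≤ r → ell r ^ δ * b r ≤ C * (ell s ^ δ * b s) := by
  obtain ⟨C, hC, h⟩ := h
  have key : ∀ s : ℝ, 1 ≤ s →
      ((ell s)⁻¹) ^ (-δ) * assocBinf b (ell s)⁻¹ = ell s ^ δ * b s := by
    intro s hs
    have hs0 : 0 < s := by linarith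
    rw [assocBinf, one_div, inv_inv, inv_rpow (ell_pos s).le, ← rpow_neg (ell_pos s).le, neg_neg,
      ell_of_one_le hs, add_sub_cancel_left, exp_log hs0]
  have mem : ∀ s : ℝ, (ell s)⁻¹ ∈ Ioc (0 : ℝ) 1 := fun s =>
    ⟨inv_pos.2 (ell_pos s), inv_le_one_of_one_le₀ (one_le_ell s)⟩
  refine ⟨C, hC, fun s r hs hsr => ?_⟩
  have hle : (ell r)⁻¹ ≤ (ell s)⁻¹ := by
    apply inv_anti₀ (ell_pos s)
    rw [ell_of_one_le hs, ell_of_one_le (hs.trans hsr)]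
    gcongr
  simpa only [key s hs, key r (hs.trans hsr)] using h _ (mem r) _ (mem s) hle

/-- The hypothesis on `B₀`, read off at the points `1 / ell s`. -/
lemma AlmostDecreasingOn.ell_rpow_mul {b : ℝ → ℝ} {γ : ℝ}
    (h : AlmostDecreasingOn (fun u => u ^ (-γ) * assocB0 b u) (Ioc 0 1)) :
    ∃ C > (0 : ℝ), ∀ s r : ℝ, 0 < s → s ≤ r → r ≤ 1 →
      ell r ^ γ * b r ≤ C * (ell s ^ γ * b s) := by
  obtain ⟨C, hC, h⟩ := h
  have key : ∀ s : ℝ, 0 < s → s ≤ 1 →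
      ((ell s)⁻¹) ^ (-γ) * assocB0 b (ell s)⁻¹ = ell s ^ γ * b s := by
    intro s hs0 hs
    rw [assocB0, one_div, inv_inv, inv_rpow (ell_pos s).le, ← rpow_neg (ell_pos s).le, neg_neg,
      ell_of_le_one hs0 hs, sub_sub_cancel, exp_log hs0]
  have mem : ∀ s : ℝ, (ell s)⁻¹ ∈ Ioc (0 : ℝ) 1 := fun s =>
    ⟨inv_pos.2 (ell_pos s), inv_le_one_of_one_le₀ (one_le_ell s)⟩
  refine ⟨C, hC, fun s r hs hsr hr => ?_⟩
  have hle : (ell s)⁻¹ ≤ (ell r)⁻¹ := by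
    apply inv_anti₀ (ell_pos r)
    rw [ell_of_le_one hs (hsr.trans hr), ell_of_le_one (hs.trans_le hsr) hr]
    gcongr
  simpa only [key s hs (hsr.trans hr), key r (hs.trans_le hsr) hr] using
    h _ (mem s) _ (mem r) hle

lemma setLIntegral_Ioi_ell_rpow_div {p t : ℝ} (hp : 1 < p) (ht : 1 ≤ t) :
    ∫⁻ s in Ioi t, ENNReal.ofReal (ell s ^ (-p) / s) =
      ENNReal.ofReal ((p - 1)⁻¹ * ell t ^ (1 - p)) := by
  have hderiv : ∀ s ∈ Ici t, HasDerivAt (fun s => -((p - 1)⁻¹ * (1 + log s) ^ (1 - p)))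
      ((1 + log s) ^ (-p) / s) s := by
    intro s hs
    have hs1 : 1 ≤ s := ht.trans hs
    have hs0 : s ≠ 0 := by linarith
    have hl : 1 + log s ≠ 0 := by have := log_nonneg hs1; positivity
    have h := ((((hasDerivAt_log hs0).const_add 1).rpow_const (p := 1 - p)
      (Or.inl hl)).const_mul (p - 1)⁻¹).neg
    refine h.congr_deriv ?_
    have : p - 1 ≠ 0 := by linarith
    rw [show 1 - p - 1 = -p by ring]
    field_simp
    ring
  have hnn : ∀ s ∈ Ioi t, 0 ≤ (1 + log s) ^ (-p) / s := by
    intro s hs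
    have hs1 : 1 ≤ s := ht.trans (le_of_lt hs)
    have := log_nonneg hs1
    positivity
  have hlim : Filter.Tendsto (fun s => -((p - 1)⁻¹ * (1 + log s) ^ (1 - p))) Filter.atTop
      (nhds 0) := by
    have h1 : Filter.Tendsto (fun s => 1 + log s) Filter.atTop Filter.atTop :=
      Filter.tendsto_atTop_add_const_left _ _ tendsto_log_atTop
    have h2 := (tendsto_rpow_neg_atTop (sub_pos.2 hp)).comp h1
    simpa [Function.comp_def] using (h2.const_mul (p - 1)⁻¹).neg
  have hint := integrableOn_Ioi_deriv_of_nonneg' hderiv hnn hlim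
  have hval := integral_Ioi_of_hasDerivAt_of_nonneg' hderiv hnn hlim
  rw [zero_sub, neg_neg, ← ell_of_one_le ht] at hval
  rw [← hval, ofReal_integral_eq_lintegral_ofReal hint (ae_restrict_of_forall_mem
    measurableSet_Ioi hnn)]
  refine setLIntegral_congr_fun measurableSet_Ioi fun s hs => ?_
  simp only [ell_of_one_le (ht.trans (le_of_lt hs))]

lemma setLIntegral_Ioc_ell_rpow_div_le {p t : ℝ} (hp : p < 1) (h0 : 0 < t) (ht : t ≤ 1) :
    ∫⁻ s in Ioc t 1, ENNReal.ofReal (ell s ^ (-p) / s) ≤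
      ENNReal.ofReal ((1 - p)⁻¹ * ell t ^ (1 - p)) := by
  have hlog : ∀ s ∈ Icc t 1, 0 < 1 - log s := fun s hs => by
    have := log_nonpos (h0.le.trans hs.1) hs.2
    linarith
  have hpos : ∀ s ∈ Icc t 1, 0 < s := fun s hs => h0.trans_le hs.1
  have hderiv : ∀ s ∈ uIcc t 1, HasDerivAt (fun s => -((1 - p)⁻¹ * (1 - log s) ^ (1 - p)))
      ((1 - log s) ^ (-p) / s) s := by
    intro s hs
    rw [uIcc_of_le ht] at hs
    have hs0 : s ≠ 0 := (hpos s hs).ne'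
    have h := ((((hasDerivAt_log hs0).const_sub 1).rpow_const (p := 1 - p)
      (Or.inl (hlog s hs).ne')).const_mul (1 - p)⁻¹).neg
    refine h.congr_deriv ?_
    have : 1 - p ≠ 0 := by linarith
    rw [show 1 - p - 1 = -p by ring]
    field_simp
  have hcont : ContinuousOn (fun s => (1 - log s) ^ (-p) / s) (Icc t 1) := by
    refine ContinuousOn.div (ContinuousOn.rpow_const ?_ fun s hs => Or.inl (hlog s hs).ne')
      continuousOn_id fun s hs => (hpos s hs).ne'
    exact continuousOn_const.sub (continuousOn_log.mono fun s hs => (hpos s hs).ne')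
  have hval := intervalIntegral.integral_eq_sub_of_hasDerivAt hderiv
    (by rw [← uIcc_of_le ht] at hcont; exact hcont.intervalIntegrable)
  rw [intervalIntegral.integral_of_le ht] at hval
  have hint : IntegrableOn (fun s => (1 - log s) ^ (-p) / s) (Ioc t 1) :=
    (hcont.integrableOn_Icc).mono_set Ioc_subset_Icc_self
  calc ∫⁻ s in Ioc t 1, ENNReal.ofReal (ell s ^ (-p) / s)
      = ∫⁻ s in Ioc t 1, ENNReal.ofReal ((1 - log s) ^ (-p) / s) := by
        refine setLIntegral_congr_fun measurableSet_Ioc fun s hs => ?_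
        simp only [ell_of_le_one (h0.trans hs.1) hs.2]
    _ = ENNReal.ofReal (∫ s in Ioc t 1, (1 - log s) ^ (-p) / s) :=
        (ofReal_integral_eq_lintegral_ofReal hint (ae_restrict_of_forall_mem
          measurableSet_Ioc fun s hs => div_nonneg
            (rpow_nonneg (hlog s (Ioc_subset_Icc_self hs)).le _)
            (hpos s (Ioc_subset_Icc_self hs)).le)).symm
    _ ≤ ENNReal.ofReal ((1 - p)⁻¹ * ell t ^ (1 - p)) := by
        refine ENNReal.ofReal_le_ofReal ?_
        rw [hval, ell_of_le_one h0 ht]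
        have : 0 < (1 - p)⁻¹ := inv_pos.2 (sub_pos.2 hp)
        simp only [log_one, sub_zero, one_rpow, mul_one]
        linarith

/-- A pointwise bound of `b s` by `b t` with logarithmic weights turns an integral bound for the
weight into one for `b ^ q`. -/
lemma setLIntegral_rpow_div_le_of_ell {b : ℝ → ℝ} {q a C D t : ℝ} {S : Set ℝ} (hq : 0 < q)
    (hC : 0 ≤ C) (hS : MeasurableSet S) (hpos : ∀ s ∈ S, 0 < s)
    (hb : ∀ s, 0 < s → 0 < b s) (ht : 0 < t)
    (hle : ∀ s ∈ S, ell s ^ a * b s ≤ C * (ell t ^ a * b t))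
    (hint : ∫⁻ s in S, ENNReal.ofReal (ell s ^ (-(a * q)) / s) ≤
      ENNReal.ofReal (D * ell t ^ (1 - a * q))) :
    ∫⁻ s in S, ENNReal.ofReal (b s ^ q / s) ≤ ENNReal.ofReal (C ^ q * D * (b t ^ q * ell t)) := by
  have hbt := hb t ht
  have hlt := ell_pos t
  have hM : 0 ≤ (C * (ell t ^ a * b t)) ^ q := by positivity
  calc ∫⁻ s in S, ENNReal.ofReal (b s ^ q / s)
      ≤ ∫⁻ s in S, ENNReal.ofReal ((C * (ell t ^ a * b t)) ^ q) *
          ENNReal.ofReal (ell s ^ (-(a * q)) / s) := by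
        refine setLIntegral_mono' hS fun s hs => ?_
        rw [← ENNReal.ofReal_mul hM, ← mul_div_assoc]
        have hs0 := hpos s hs
        have hbs := hb s hs0
        have hls := ell_pos s
        refine ENNReal.ofReal_le_ofReal (div_le_div_of_nonneg_right ?_ hs0.le)
        have h := rpow_le_rpow (by positivity) (hle s hs) hq.le
        rw [mul_rpow (by positivity) hbs.le, ← rpow_mul hls.le] at h
        rw [rpow_neg hls.le, ← div_eq_mul_inv, le_div_iff₀ (by positivity)]
        linarith
    _ = ENNReal.ofReal ((C * (ell t ^ a * b t)) ^ q) *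
          ∫⁻ s in S, ENNReal.ofReal (ell s ^ (-(a * q)) / s) :=
        lintegral_const_mul' _ _ ENNReal.ofReal_ne_top
    _ ≤ ENNReal.ofReal ((C * (ell t ^ a * b t)) ^ q) *
          ENNReal.ofReal (D * ell t ^ (1 - a * q)) := by gcongr
    _ = ENNReal.ofReal (C ^ q * D * (b t ^ q * ell t)) := by
        rw [← ENNReal.ofReal_mul hM]
        congr 1
        rw [mul_rpow hC (by positivity), mul_rpow (by positivity) hbt.le, ← rpow_mul hlt.le]
        have : ell t ^ (a * q) * ell t ^ (1 - a * q) = ell t := by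
          rw [← rpow_add hlt, add_sub_cancel, rpow_one]
        linear_combination C ^ q * D * b t ^ q * this

lemma setLIntegral_Ioi_rpow_div_le {b : ℝ → ℝ} {q γ δ : ℝ} (hq : 0 < q)
    (hb : ∀ s, 0 < s → 0 < b s) (hγ : γ < 1 / q) (hδ : 1 / q < δ)
    (hB0 : AlmostDecreasingOn (fun u => u ^ (-γ) * assocB0 b u) (Ioc 0 1))
    (hBinf : AlmostIncreasingOn (fun u => u ^ (-δ) * assocBinf b u) (Ioc 0 1)) :
    ∃ K > (0 : ℝ), ∀ t > (0 : ℝ), ∫⁻ s in Ioi t, ENNReal.ofReal (b s ^ q / s) ≤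
      ENNReal.ofReal (K * (b t ^ q * ell t)) := by
  obtain ⟨C₀, hC₀, h₀⟩ := hB0.ell_rpow_mul
  obtain ⟨C₁, hC₁, h₁⟩ := hBinf.ell_rpow_mul
  have hγq : γ * q < 1 := (lt_div_iff₀ hq).1 hγ
  have hδq : 1 < δ * q := (div_lt_iff₀ hq).1 hδ
  have hD₀ : 0 < (1 - γ * q)⁻¹ := inv_pos.2 (sub_pos.2 hγq)
  have hD₁ : 0 < (δ * q - 1)⁻¹ := inv_pos.2 (sub_pos.2 hδq)
  have large : ∀ t : ℝ, 1 ≤ t → ∫⁻ s in Ioi t, ENNReal.ofReal (b s ^ q / s) ≤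
      ENNReal.ofReal (C₁ ^ q * (δ * q - 1)⁻¹ * (b t ^ q * ell t)) := fun t ht =>
    setLIntegral_rpow_div_le_of_ell hq hC₁.le measurableSet_Ioi
      (fun s hs => (zero_lt_one.trans_le ht).trans hs) hb (zero_lt_one.trans_le ht)
      (fun s hs => h₁ t s ht (le_of_lt hs)) (setLIntegral_Ioi_ell_rpow_div hδq ht).le
  set K₀ := C₀ ^ q * (1 - γ * q)⁻¹
  set K₁ := C₁ ^ q * (δ * q - 1)⁻¹
  have hK₀p : 0 < K₀ := by positivity
  have hK₁p : 0 < K₁ := by positivity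
  refine ⟨K₀ + K₁ * C₀ ^ q + K₁, by positivity, fun t ht => ?_⟩
  have hbt := hb t ht
  have hlt := ell_pos t
  rcases le_total 1 t with h1 | h1
  · refine (large t h1).trans (ENNReal.ofReal_le_ofReal ?_)
    gcongr
    have : 0 ≤ K₁ * C₀ ^ q := by positivity
    linarith
  · have hsmall : ∫⁻ s in Ioc t 1, ENNReal.ofReal (b s ^ q / s) ≤
        ENNReal.ofReal (K₀ * (b t ^ q * ell t)) :=
      setLIntegral_rpow_div_le_of_ell hq hC₀.le measurableSet_Ioc
        (fun s hs => ht.trans hs.1) hb ht (fun s hs => h₀ t s ht hs.1.le hs.2)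
        (setLIntegral_Ioc_ell_rpow_div_le hγq ht h1)
    have hb1 : b 1 ^ q * ell 1 ≤ C₀ ^ q * (b t ^ q * ell t) := by
      have h := h₀ t 1 ht h1 le_rfl
      have hell : ell 1 = 1 := by simp [ell]
      have hb1 := hb 1 one_pos
      rw [hell, one_rpow, one_mul] at h
      rw [hell, mul_one]
      have h2 := rpow_le_rpow hb1.le h hq.le
      rw [mul_rpow hC₀.le (by positivity), mul_rpow (by positivity) hbt.le,
        ← rpow_mul hlt.le] at h2
      refine h2.trans ?_
      rw [mul_comm (b t ^ q)]
      gcongr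
      calc ell t ^ (γ * q) ≤ ell t ^ (1 : ℝ) :=
            rpow_le_rpow_of_exponent_le (one_le_ell t) hγq.le
        _ = ell t := rpow_one _
    rw [← Ioc_union_Ioi_eq_Ioi h1]
    refine (lintegral_union_le _ _ _).trans ((add_le_add hsmall (large 1 le_rfl)).trans ?_)
    rw [← ENNReal.ofReal_add (by positivity)
      (mul_nonneg hK₁p.le (mul_nonneg (rpow_nonneg (hb 1 one_pos).le _) (ell_pos 1).le))]
    refine ENNReal.ofReal_le_ofReal ?_
    have h3 := mul_le_mul_of_nonneg_left hb1 hK₁p.le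
    have h4 : 0 ≤ K₁ * (b t ^ q * ell t) := by positivity
    linarith

/-- `b` stays comparable to `b t` from below on an interval to the right of `t` whose
logarithmic length is at least `ell t / 2`. -/
lemma exists_interval_mul_le {b : ℝ → ℝ} {γ δ : ℝ} (hb : SlowlyVarying b)
    (hsq : EquivOn (fun t => b (t ^ 2)) b (Ioi 0)) (hδ : 0 ≤ δ)
    (hB0 : AlmostDecreasingOn (fun u => u ^ (-γ) * assocB0 b u) (Ioc 0 1))
    (hBinf : AlmostIncreasingOn (fun u => u ^ (-δ) * assocBinf b u) (Ioc 0 1)) :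
    ∃ c > (0 : ℝ), ∀ t > (0 : ℝ), ∃ T, t ≤ T ∧ ell t / 2 ≤ log (T / t) ∧
      ∀ s ∈ Ioc t T, c * b t ≤ b s := by
  obtain ⟨C₀, hC₀, h₀⟩ := hB0.ell_rpow_mul
  obtain ⟨C₁, hC₁, h₁⟩ := hBinf.ell_rpow_mul
  obtain ⟨-, hpos, hsv⟩ := hb
  obtain ⟨⟨A, hA, hA'⟩, -⟩ := hsv 1 one_pos
  obtain ⟨c, hc, C, hC, hsq⟩ := hsq
  simp only [rpow_one, mem_Ioi] at hA' hpos hsq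
  have near : ∀ r s : ℝ, 0 < r → r ≤ s → s ≤ exp 1 * r → b r ≤ A * exp 1 * b s := by
    intro r s hr hrs hs
    have hbs := hpos s (hr.trans_le hrs)
    have h := hA' r hr s (hr.trans_le hrs) hrs
    have h2 : A * (s * b s) ≤ A * (exp 1 * r * b s) := by gcongr
    refine le_of_mul_le_mul_left ?_ hr
    linarith
  have he : (1 : ℝ) ≤ exp 1 := one_le_exp zero_le_one
  have hdec : ∀ t : ℝ, 0 < t → t ≤ 1 → ∀ s : ℝ, t ≤ s → s ≤ √t →
      b (√t) ≤ C₀ * 2 ^ |γ| * b s := by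
    intro t ht h1 s hts hs
    have hs0 : 0 < s := ht.trans_le hts
    have hr1 : √t ≤ 1 := sqrt_le_one.2 h1
    have hr0 : 0 < √t := sqrt_pos.2 ht
    have hbs := hpos s hs0
    have h := h₀ s (√t) hs0 hs hr1
    have hls := ell_pos s
    have hlr := ell_pos (√t)
    have hel : ell (√t) ≤ ell s := by
      rw [ell_of_le_one hr0 hr1, ell_of_le_one hs0 (hs.trans hr1)]
      gcongr
    have hel2 : ell s ≤ 2 * ell (√t) := by
      rw [ell_of_le_one hr0 hr1, ell_of_le_one hs0 (hs.trans hr1), log_sqrt ht.le]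
      have := log_le_log ht hts
      linarith
    have hratio : (ell s / ell (√t)) ^ γ ≤ 2 ^ |γ| :=
      (rpow_le_rpow_of_exponent_le ((one_le_div hlr).2 hel) (le_abs_self γ)).trans
        (rpow_le_rpow (by positivity) ((div_le_iff₀ hlr).2 hel2) (abs_nonneg γ))
    rw [div_rpow hls.le hlr.le, div_le_iff₀ (by positivity)] at hratio
    have h2 : C₀ * (ell s ^ γ * b s) ≤ C₀ * (2 ^ |γ| * ell (√t) ^ γ * b s) := by gcongr
    refine le_of_mul_le_mul_left ?_ (rpow_pos_of_pos hlr γ)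
    linarith
  have hG : (0 : ℝ) < C₀ * 2 ^ |γ| := by positivity
  have hE : (0 : ℝ) < A * exp 1 := by positivity
  refine ⟨min (c * (A * exp 1 * C₁)⁻¹) (C⁻¹ * (C₀ * 2 ^ |γ| + A * exp 1)⁻¹), by positivity,
    fun t ht => ?_⟩
  have hbt := hpos t ht
  rcases le_total 1 t with h1 | h1
  · have ht2 : t ≤ t ^ 2 := by nlinarith
    have htT : t ≤ exp 1 * t ^ 2 := by nlinarith
    refine ⟨exp 1 * t ^ 2, htT, ?_, fun s hs => ?_⟩
    · rw [log_div (by positivity) ht.ne', log_mul (by positivity) (by positivity), log_exp,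
        log_pow, ell_of_one_le h1]
      have := log_nonneg h1
      push_cast
      linarith
    · have hs1 : 1 ≤ s := h1.trans hs.1.le
      have hT1 : 1 ≤ exp 1 * t ^ 2 := h1.trans htT
      have hbs := hpos s (by linarith)
      have hbT := hpos (exp 1 * t ^ 2) (by positivity)
      have hls := ell_pos s
      have e1 := (hsq t ht).1
      have e2 := near (t ^ 2) (exp 1 * t ^ 2) (by positivity) (by nlinarith) le_rfl
      have e3 : b (exp 1 * t ^ 2) ≤ C₁ * b s := by
        have h := h₁ s _ hs1 hs.2
        have hel : ell s ≤ ell (exp 1 * t ^ 2) := by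
          rw [ell_of_one_le hs1, ell_of_one_le hT1]
          have := log_le_log (by linarith) hs.2
          linarith
        have h2 : ell s ^ δ * b (exp 1 * t ^ 2) ≤
            ell (exp 1 * t ^ 2) ^ δ * b (exp 1 * t ^ 2) := by gcongr
        refine le_of_mul_le_mul_left ?_ (rpow_pos_of_pos hls δ)
        linarith
      have e4 : c * b t ≤ A * exp 1 * C₁ * b s := by
        have := mul_le_mul_of_nonneg_left e3 hE.le
        linarith
      refine (mul_le_mul_of_nonneg_right (min_le_left _ _) hbt.le).trans ?_
      rw [mul_right_comm, ← div_eq_mul_inv, div_le_iff₀ (by positivity)]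
      linarith
  · have hr0 : 0 < √t := sqrt_pos.2 ht
    have htr : t ≤ √t := by
      have := sq_sqrt ht.le
      have := sqrt_le_one.2 h1
      nlinarith
    refine ⟨exp 1 * √t, by nlinarith, ?_, fun s hs => ?_⟩
    · rw [log_div (by positivity) ht.ne', log_mul (by positivity) hr0.ne', log_exp,
        log_sqrt ht.le, ell_of_le_one ht h1]
      linarith
    · have hbs := hpos s (ht.trans hs.1)
      have e1 := (hsq (√t) hr0).2
      rw [sq_sqrt ht.le] at e1
      have e2 : b (√t) ≤ (C₀ * 2 ^ |γ| + A * exp 1) * b s := by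
        have p1 : 0 ≤ C₀ * 2 ^ |γ| * b s := by positivity
        have p2 : 0 ≤ A * exp 1 * b s := by positivity
        rcases le_total s (√t) with h | h
        · have := hdec t ht h1 s hs.1.le h
          linarith
        · have := near (√t) s hr0 h hs.2
          linarith
      have e3 : b t ≤ C * ((C₀ * 2 ^ |γ| + A * exp 1) * b s) := e1.trans (by gcongr)
      refine (mul_le_mul_of_nonneg_right (min_le_right _ _) hbt.le).trans ?_
      rw [← mul_inv, inv_mul_le_iff₀ (by positivity)]
      linarith

lemma ofReal_rpow_mul_log_le_setLIntegral {b : ℝ → ℝ} {q m t T : ℝ} (hq : 0 ≤ q) (hm : 0 ≤ m)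
    (ht : 0 < t) (htT : t ≤ T) (hle : ∀ s ∈ Ioc t T, m ≤ b s) :
    ENNReal.ofReal (m ^ q * log (T / t)) ≤ ∫⁻ s in Ioi t, ENNReal.ofReal (b s ^ q / s) := by
  have hint : IntegrableOn (fun s : ℝ => m ^ q * s⁻¹) (Ioc t T) := by
    refine (ContinuousOn.integrableOn_Icc ?_).mono_set Ioc_subset_Icc_self
    exact continuousOn_const.mul (continuousOn_inv₀.mono fun s hs => (ht.trans_le hs.1).ne')
  have hval : ∫ s in Ioc t T, m ^ q * s⁻¹ = m ^ q * log (T / t) := by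
    rw [integral_const_mul, ← intervalIntegral.integral_of_le htT,
      integral_inv_of_pos ht (ht.trans_le htT)]
  rw [← hval, ofReal_integral_eq_lintegral_ofReal hint (ae_restrict_of_forall_mem
    measurableSet_Ioc fun s hs => mul_nonneg (rpow_nonneg hm q)
      (inv_nonneg.2 (ht.trans hs.1).le))]
  refine (setLIntegral_mono' measurableSet_Ioc fun s hs => ?_).trans
    (lintegral_mono_set Ioc_subset_Ioi_self)
  rw [← div_eq_mul_inv]
  exact ENNReal.ofReal_le_ofReal (div_le_div_of_nonneg_right
    (rpow_le_rpow hm (hle s hs) hq) (ht.trans hs.1).le)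

lemma ofReal_mul_rpow_mul_rpow_one_div {K x y q : ℝ} (hq : 0 < q) (hK : 0 ≤ K) (hx : 0 ≤ x)
    (hy : 0 ≤ y) : ENNReal.ofReal (K * (x ^ q * y)) ^ (1 / q) =
      ENNReal.ofReal (K ^ (1 / q) * (x * y ^ (1 / q))) := by
  rw [ENNReal.ofReal_rpow_of_nonneg (by positivity) (by positivity),
    mul_rpow hK (by positivity), mul_rpow (by positivity) hy, ← rpow_mul hx,
    mul_one_div_cancel hq.ne', rpow_one]

theorem limiting_Lq_norm_near_infty (q : ℝ) (hq : 1 ≤ q) (b : ℝ → ℝ)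
    (hb : SlowlyVarying b) (hsq : EquivOn (fun t => b (t ^ 2)) b (Ioi 0))
    (γ δ : ℝ) (hγ : γ < 1 / q) (hδ : 1 / q < δ)
    (hB0 : AlmostDecreasingOn (fun u => u ^ (-γ) * assocB0 b u) (Ioc 0 1))
    (hBinf : AlmostIncreasingOn (fun u => u ^ (-δ) * assocBinf b u) (Ioc 0 1)) :
    ∃ c > (0:ℝ), ∃ C > (0:ℝ), ∀ t > (0:ℝ),
      ENNReal.ofReal (c * (b t * ell t ^ (1 / q)))
          ≤ (∫⁻ s in Ioi t, ENNReal.ofReal (b s ^ q / s)) ^ (1 / q) ∧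
      (∫⁻ s in Ioi t, ENNReal.ofReal (b s ^ q / s)) ^ (1 / q)
          ≤ ENNReal.ofReal (C * (b t * ell t ^ (1 / q))) := by
  have hq0 : 0 < q := by linarith
  have hpos : ∀ s, 0 < s → 0 < b s := hb.2.1
  have hδ0 : 0 ≤ δ := ((one_div_pos.2 hq0).trans hδ).le
  obtain ⟨K, hK, hup⟩ := setLIntegral_Ioi_rpow_div_le hq0 hpos hγ hδ hB0 hBinf
  obtain ⟨c, hc, hlow⟩ := exists_interval_mul_le hb hsq hδ0 hB0 hBinf
  refine ⟨(c ^ q / 2) ^ (1 / q), by positivity, K ^ (1 / q), by positivity, fun t ht => ?_⟩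
  have hbt := hpos t ht
  have hlt := ell_pos t
  rw [← ofReal_mul_rpow_mul_rpow_one_div hq0 (by positivity) hbt.le hlt.le,
    ← ofReal_mul_rpow_mul_rpow_one_div hq0 hK.le hbt.le hlt.le]
  refine ⟨ENNReal.rpow_le_rpow ?_ (by positivity),
    ENNReal.rpow_le_rpow (hup t ht) (by positivity)⟩
  obtain ⟨T, htT, hlog, hle⟩ := hlow t ht
  refine le_trans (ENNReal.ofReal_le_ofReal ?_)
    (ofReal_rpow_mul_log_le_setLIntegral hq0.le (by positivity) ht htT hle)
  rw [mul_rpow hc.le hbt.le]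
  calc c ^ q / 2 * (b t ^ q * ell t) = c ^ q * b t ^ q * (ell t / 2) := by ring
    _ ≤ c ^ q * b t ^ q * log (T / t) := by gcongr
end

section
/- Let 1 ≤ q < ∞, 0 ≤ θ ≤ 1, let b ∈ SV, and let φ ∈ SV satisfy φ(t²) ∼ φ(t) on (0,∞), with associated functions Φ₀ and Φ∞. Assume there exist real numbers α < 0 < β such that u ↦ u^{−α}·Φ∞(u) is almost decreasing on (0,1] and u ↦ u^{−β}·Φ₀(u) is almost increasing on (0,1] (i.e. ρ_{Φ∞} < 0 < π_{Φ₀}). Then there exist constants c, C > 0 such that for every function k:(0,∞)→[0,∞) which is increasing and such that t ↦ k(t)/t is decreasing (i.e. k quasi-concave; in particular k(·) = K(·,f) for a K-functional): c·(∫₀^∞ (t^{−θ}·b(t)·k(t))^q dt/t)^{1/q} ≤ (∫₀^∞ (φ(t)^{−θ}·b(φ(t))·k(φ(t)))^q dt/(t·ℓ(t)))^{1/q} ≤ C·(∫₀^∞ (t^{−θ}·b(t)·k(t))^q dt/t)^{1/q}, the constants being independent of k. -/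
open Set MeasureTheory Real

/-- A Schur-type comparison of two integrals along a measurable relation `R` whose sections have
measure bounded below on one side and above on the other. -/
lemma mul_lintegral_le_of_relation {X Y : Type*} [MeasurableSpace X] [MeasurableSpace Y]
    {μ : Measure X} {ν : Measure Y} [SFinite μ] [SFinite ν] {R : Set (X × Y)}
    (hR : MeasurableSet R) {f : X → ENNReal} {g : Y → ENNReal} (hg : Measurable g)
    {D c C : ENNReal} (hD : D ≠ ⊤) (hfg : ∀ x y, (x, y) ∈ R → f x ≤ D * g y)
    (hc : ∀ x, c ≤ ν {y | (x, y) ∈ R}) (hC : ∀ y, μ {x | (x, y) ∈ R} ≤ C) (hCtop : C ≠ ⊤)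
    (hctop : c ≠ ⊤) :
    c * ∫⁻ x, f x ∂μ ≤ D * C * ∫⁻ y, g y ∂ν := by
  have hmeas : Measurable (Function.uncurry fun x y => R.indicator (fun p => D * g p.2) (x, y)) :=
    ((hg.comp measurable_snd).const_mul D).indicator hR
  calc c * ∫⁻ x, f x ∂μ = ∫⁻ x, c * f x ∂μ := (lintegral_const_mul' _ _ hctop).symm
    _ ≤ ∫⁻ x, ∫⁻ y, R.indicator (fun p => D * g p.2) (x, y) ∂ν ∂μ := by
        refine lintegral_mono fun x => ?_
        have hs : MeasurableSet {y | (x, y) ∈ R} := measurable_prodMk_left hR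
        calc c * f x ≤ f x * ν {y | (x, y) ∈ R} := by
              rw [mul_comm]; gcongr; exact hc x
          _ = ∫⁻ y, {y | (x, y) ∈ R}.indicator (fun _ => f x) y ∂ν :=
              (lintegral_indicator_const hs _).symm
          _ ≤ _ := by
              refine lintegral_mono fun y => ?_
              by_cases h : (x, y) ∈ R
              · simpa [h] using hfg x y h
              · simp [h]
    _ = ∫⁻ y, ∫⁻ x, R.indicator (fun p => D * g p.2) (x, y) ∂μ ∂ν :=
        lintegral_lintegral_swap hmeas.aemeasurable
    _ ≤ ∫⁻ y, D * C * g y ∂ν := by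
        refine lintegral_mono fun y => ?_
        have hs : MeasurableSet {x | (x, y) ∈ R} := measurable_prodMk_right hR
        calc ∫⁻ x, R.indicator (fun p => D * g p.2) (x, y) ∂μ
            = ∫⁻ x, {x | (x, y) ∈ R}.indicator (fun _ => D * g y) x ∂μ := by
              refine lintegral_congr fun x => ?_
              by_cases h : (x, y) ∈ R <;> simp [h]
          _ = D * g y * μ {x | (x, y) ∈ R} := lintegral_indicator_const hs _
          _ ≤ D * g y * C := by gcongr; exact hC y
          _ = D * C * g y := by ring
    _ = _ := lintegral_const_mul' _ _ (ENNReal.mul_ne_top hD hCtop)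

lemma lintegral_Ioi_eq_lintegral_exp (h : ℝ → ENNReal) :
    ∫⁻ t in Ioi (0:ℝ), h t = ∫⁻ y, ENNReal.ofReal (exp y) * h (exp y) := by
  have := lintegral_image_eq_lintegral_abs_deriv_mul (s := univ) MeasurableSet.univ
    (fun x _ => (Real.hasDerivAt_exp x).hasDerivWithinAt) Real.exp_injective.injOn h
  rw [image_univ, Real.range_exp] at this
  simpa [abs_of_pos (exp_pos _)] using this

lemma lintegral_Ioi_eq_lintegral_exp_sinh (h : ℝ → ENNReal) :
    ∫⁻ t in Ioi (0:ℝ), h t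
      = ∫⁻ x, ENNReal.ofReal (exp (sinh x) * cosh x) * h (exp (sinh x)) := by
  have := lintegral_image_eq_lintegral_abs_deriv_mul (s := univ) MeasurableSet.univ
    (fun x _ => (Real.hasDerivAt_sinh x).exp.hasDerivWithinAt)
    (Real.exp_injective.comp Real.sinh_injective).injOn h
  have hr : (fun x => exp (sinh x)) '' univ = Ioi 0 := by
    rw [image_univ, ← Real.range_exp]
    exact Real.sinh_surjective.range_comp exp
  rw [hr] at this
  simpa [abs_of_pos (exp_pos _), abs_of_pos (cosh_pos _)] using this

lemma abs_log_one_add_abs_sinh_sub_abs_le (x : ℝ) :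
    abs (log (1 + |sinh x|) - |x|) ≤ log 2 := by
  have hx : |sinh x| = sinh |x| := by
    rw [Real.abs_sinh]
  have h0 := abs_nonneg x
  have hs : sinh |x| = (exp |x| - exp (-|x|)) / 2 := Real.sinh_eq _
  have h1 : exp (-|x|) ≤ 1 := Real.exp_le_one_iff.2 (by linarith)
  have h2 : 1 ≤ exp |x| := Real.one_le_exp h0
  have h3 := exp_pos (-|x|)
  have hl : |x| = log (exp |x|) := (Real.log_exp _).symm
  rw [hx, abs_le]
  constructor
  · have : log (exp |x|) ≤ log (2 * (1 + sinh |x|)) :=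
      Real.log_le_log (exp_pos _) (by linarith)
    rw [Real.log_mul (by norm_num) (by linarith)] at this
    linarith
  · have : log (1 + sinh |x|) ≤ log (2 * exp |x|) :=
      Real.log_le_log (by linarith) (by linarith)
    rw [Real.log_mul (by norm_num) (by linarith)] at this
    linarith

/-- A function that coarsely expands distances and has bounded increments along the integers
preserves, up to constants, the integral of functions that are roughly constant at unit scale. -/
lemma exists_lintegral_comp_comparison {ψ : ℝ → ℝ} (hψ : Measurable ψ) {γ A B : ℝ} (hγ : 0 < γ)
    (hA : ∀ x y, x ≤ y → γ * (y - x) - A ≤ ψ y - ψ x)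
    (hB : ∀ n : ℤ, ψ (n + 1) ≤ ψ n + B) :
    ∃ M > 0, ∀ D > 0, ∃ K > 0, ∀ G : ℝ → ENNReal, Measurable G →
      (∀ y z, |y - z| ≤ M → G y ≤ ENNReal.ofReal D * G z) →
      ∫⁻ x, G (ψ x) ≤ ENNReal.ofReal K * ∫⁻ y, G y ∧
      ∫⁻ y, G y ≤ ENNReal.ofReal K * ∫⁻ x, G (ψ x) := by
  have hA0 : 0 ≤ A := by have := hA 0 0 le_rfl; simp at this; exact this
  set M := 1 + A + |B| with hM
  have hB0 := abs_nonneg B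
  refine ⟨M, by positivity, fun D hD => ?_⟩
  set C := (2 + A) / γ with hC
  have hC0 : 0 < C := by positivity
  refine ⟨D * C + D * (2 * M), by positivity, fun G hG hGD => ⟨?_, ?_⟩⟩
  · have hR : MeasurableSet {p : ℝ × ℝ | |ψ p.1 - p.2| ≤ 1} :=
      measurableSet_le (by fun_prop) measurable_const
    have := mul_lintegral_le_of_relation (μ := volume) (ν := volume) hR (f := fun x => G (ψ x))
      (g := G) hG (D := ENNReal.ofReal D) (c := 1) (C := ENNReal.ofReal C) (by simp)
      (fun x y h => hGD _ _ (le_trans h (by linarith)))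
      (fun x => ?_) (fun y => ?_) (by simp) (by simp)
    · rw [one_mul, ← ENNReal.ofReal_mul hD.le] at this
      refine this.trans ?_
      gcongr
      have : 0 < D * (2 * M) := by positivity
      linarith
    · calc (1 : ENNReal) = volume (Icc (ψ x) (ψ x + 1)) := by simp
        _ ≤ _ := by
          refine measure_mono fun y hy => ?_
          simp only [mem_ofPred_eq, abs_le]
          constructor <;> linarith [hy.1, hy.2]
    · refine (Real.volume_le_diam _).trans (Metric.ediam_le fun x hx z hz => ?_)
      simp only [mem_ofPred_eq, abs_le] at hx hz
      rw [edist_dist]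
      refine ENNReal.ofReal_le_ofReal ?_
      rw [Real.dist_eq, hC, le_div_iff₀ hγ, mul_comm]
      rcases le_total x z with h | h
      · rw [abs_of_nonpos (by linarith)]
        linarith [hA x z h]
      · rw [abs_of_nonneg (by linarith)]
        linarith [hA z x h]
  · have hR : MeasurableSet {p : ℝ × ℝ | |ψ p.2 - p.1| ≤ M} :=
      measurableSet_le (by fun_prop) measurable_const
    have := mul_lintegral_le_of_relation (μ := volume) (ν := volume) hR (f := G)
      (g := fun x => G (ψ x)) (hG.comp hψ) (D := ENNReal.ofReal D) (c := 1)
      (C := ENNReal.ofReal (2 * M)) (by simp)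
      (fun x y h => hGD _ _ (by rw [abs_sub_comm]; exact h))
      (fun y => ?_) (fun x => ?_) ENNReal.ofReal_ne_top (by simp)
    · rw [one_mul, ← ENNReal.ofReal_mul hD.le] at this
      refine this.trans ?_
      gcongr
      have : 0 < D * C := by positivity
      linarith
    · obtain ⟨n, hn, hmax⟩ : ∃ n : ℤ, ψ n ≤ y ∧ ∀ m : ℤ, ψ m ≤ y → m ≤ n := by
        refine Int.exists_greatest_of_bdd ?_ ?_
        · obtain ⟨N, hN⟩ := exists_nat_gt ((y - ψ 0 + A) / γ)
          rw [div_lt_iff₀ hγ] at hN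
          refine ⟨N, fun z hz => ?_⟩
          by_contra! h
          have hzN : (N : ℝ) < z := by exact_mod_cast h
          have := hA 0 z (le_trans (Nat.cast_nonneg N) hzN.le)
          nlinarith
        · obtain ⟨N, hN⟩ := exists_nat_gt ((ψ 0 - y + A) / γ)
          rw [div_lt_iff₀ hγ] at hN
          refine ⟨-N, ?_⟩
          have := hA (-N) 0 (by simp)
          push_cast
          nlinarith
      have hn1 : y < ψ (n + 1) := by
        by_contra! h
        have := hmax (n + 1) (by push_cast; exact h)
        lia
      calc (1 : ENNReal) = volume (Icc (n : ℝ) (n + 1)) := by simp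
        _ ≤ _ := by
          refine measure_mono fun x hx => ?_
          simp only [mem_ofPred_eq, abs_le]
          have h1 := hA n x hx.1
          have h2 := hA x (n + 1) hx.2
          have h3 : 0 ≤ γ * (x - n) := mul_nonneg hγ.le (by linarith [hx.1])
          have h4 : 0 ≤ γ * (n + 1 - x) := mul_nonneg hγ.le (by linarith [hx.2])
          have h5 := hB n
          have h6 := le_abs_self B
          constructor <;> linarith
    · calc volume {y | |ψ x - y| ≤ M} ≤ volume (Icc (ψ x - M) (ψ x + M)) := by
            refine measure_mono fun y hy => ?_
            simp only [mem_ofPred_eq, abs_le] at hy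
            exact ⟨by linarith, by linarith⟩
        _ = _ := by rw [Real.volume_Icc]; congr 1; ring

lemma sinh_add_one_le {x : ℝ} (hx : 0 ≤ x) : sinh (x + 1) ≤ 4 * sinh x + 2 := by
  have h0 : 0 ≤ sinh x := Real.sinh_nonneg_iff.2 hx
  have h1 : cosh x ≤ 1 + sinh x := by
    have := Real.cosh_sub_sinh x
    have : exp (-x) ≤ 1 := Real.exp_le_one_iff.2 (by linarith)
    linarith
  have h2 : cosh 1 + sinh 1 = exp 1 := Real.cosh_add_sinh 1
  have h3 : sinh 1 < cosh 1 := Real.sinh_lt_cosh 1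
  have h4 : 0 ≤ sinh (1:ℝ) := Real.sinh_nonneg_iff.2 zero_le_one
  have h5 := Real.exp_one_lt_d9
  rw [Real.sinh_add]
  nlinarith

lemma SlowlyVarying.exists_exp_bound {b : ℝ → ℝ} (hb : SlowlyVarying b) :
    ∃ C > 0, ∀ y z, y ≤ z → b (exp z) ≤ C * exp (z - y) * b (exp y) ∧
      b (exp y) ≤ C * exp (z - y) * b (exp z) := by
  obtain ⟨-, hpos, h⟩ := hb
  obtain ⟨⟨C, hC, hinc⟩, ⟨C', hC', hdec⟩⟩ := h 1 one_pos
  refine ⟨C + C', by positivity, fun y z hyz => ?_⟩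
  have h1 := hinc (exp y) (exp_pos y) (exp z) (exp_pos z) (exp_le_exp.2 hyz)
  have h2 := hdec (exp y) (exp_pos y) (exp z) (exp_pos z) (exp_le_exp.2 hyz)
  have hby := hpos _ (exp_pos y)
  have hbz := hpos _ (exp_pos z)
  simp only [Real.rpow_neg_one, Real.rpow_one] at h1 h2
  rw [Real.exp_sub]
  have hy := exp_pos y
  have hz := exp_pos z
  constructor
  · have : b (exp z) ≤ C' * (exp z / exp y) * b (exp y) := by
      calc b (exp z) = exp z * ((exp z)⁻¹ * b (exp z)) := by field_simp
        _ ≤ exp z * (C' * ((exp y)⁻¹ * b (exp y))) := by gcongr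
        _ = _ := by field_simp
    refine this.trans ?_
    gcongr
    linarith
  · have : b (exp y) ≤ C * (exp z / exp y) * b (exp z) := by
      calc b (exp y) = (exp y)⁻¹ * (exp y * b (exp y)) := by field_simp
        _ ≤ (exp y)⁻¹ * (C * (exp z * b (exp z))) := by gcongr
        _ = _ := by field_simp
    refine this.trans ?_
    gcongr
    linarith

lemma SlowlyVarying.exists_abs_log_sub_le {b : ℝ → ℝ} (hb : SlowlyVarying b) :
    ∃ S, ∀ y z, y ≤ z → |log (b (exp z)) - log (b (exp y))| ≤ S + (z - y) := by
  obtain ⟨C, hC, h⟩ := hb.exists_exp_bound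
  refine ⟨log C, fun y z hyz => ?_⟩
  obtain ⟨h1, h2⟩ := h y z hyz
  have hby := hb.2.1 _ (exp_pos y)
  have hbz := hb.2.1 _ (exp_pos z)
  have e := (exp_pos (z - y)).ne'
  have h1 := Real.log_le_log hbz h1
  have h2 := Real.log_le_log hby h2
  rw [Real.log_mul (by positivity) hby.ne', Real.log_mul hC.ne' e, Real.log_exp] at h1
  rw [Real.log_mul (by positivity) hbz.ne', Real.log_mul hC.ne' e, Real.log_exp] at h2
  rw [abs_le]
  constructor <;> linarith

lemma EquivOn.exists_abs_log_sub_le {φ : ℝ → ℝ} (hφ : ∀ t ∈ Ioi (0:ℝ), 0 < φ t)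
    (hsq : EquivOn (fun t => φ (t ^ 2)) φ (Ioi 0)) :
    ∃ Q, ∀ v, |log (φ (exp (2 * v))) - log (φ (exp v))| ≤ Q := by
  obtain ⟨c, hc, C, hC, h⟩ := hsq
  refine ⟨max (log C) (-log c), fun v => ?_⟩
  have h' := h (exp v) (exp_pos v)
  have e : exp v ^ 2 = exp (2 * v) := by rw [← Real.exp_nat_mul]; norm_num
  simp only [e] at h'
  obtain ⟨h1, h2⟩ := h'
  have hv := hφ _ (exp_pos v)
  have h1 := Real.log_le_log (by positivity) h1
  have h2 := Real.log_le_log (hφ _ (exp_pos _)) h2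
  rw [Real.log_mul hc.ne' hv.ne'] at h1
  rw [Real.log_mul hC.ne' hv.ne'] at h2
  rw [abs_le]
  constructor
  · linarith [le_max_right (log C) (-log c)]
  · linarith [le_max_left (log C) (-log c)]

lemma exists_log_growth_of_nonneg {φ : ℝ → ℝ} (hφ : ∀ t ∈ Ioi (0:ℝ), 0 < φ t) {α : ℝ}
    (h : AlmostDecreasingOn (fun u => u ^ (-α) * assocBinf φ u) (Ioc 0 1)) :
    ∃ A, ∀ v w, 0 ≤ v → v ≤ w →
      -α * (log (1 + w) - log (1 + v)) - A ≤ log (φ (exp w)) - log (φ (exp v)) := by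
  obtain ⟨C, hC, h⟩ := h
  refine ⟨log C, fun v w hv hvw => ?_⟩
  have hv1 : 0 < 1 + v := by linarith
  have hw1 : 0 < 1 + w := by linarith
  have h' := h (1 + w)⁻¹ ⟨by positivity, inv_le_one_of_one_le₀ (by linarith)⟩
    (1 + v)⁻¹ ⟨by positivity, inv_le_one_of_one_le₀ (by linarith)⟩
    (inv_anti₀ hv1 (by linarith))
  simp only [assocBinf, one_div, inv_inv, add_sub_cancel_left] at h'
  have p1 := hφ _ (exp_pos v)
  have p2 := hφ _ (exp_pos w)
  have p3 : 0 < (1 + v)⁻¹ ^ (-α) := by positivity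
  have p4 : 0 < (1 + w)⁻¹ ^ (-α) := by positivity
  have h' := Real.log_le_log (by positivity) h'
  rw [Real.log_mul p3.ne' p1.ne', Real.log_mul hC.ne' (by positivity),
    Real.log_mul p4.ne' p2.ne', Real.log_rpow (by positivity), Real.log_rpow (by positivity),
    Real.log_inv, Real.log_inv] at h'
  linarith

lemma exists_log_growth_of_nonpos {φ : ℝ → ℝ} (hφ : ∀ t ∈ Ioi (0:ℝ), 0 < φ t) {β : ℝ}
    (h : AlmostIncreasingOn (fun u => u ^ (-β) * assocB0 φ u) (Ioc 0 1)) :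
    ∃ A, ∀ v w, w ≤ 0 → v ≤ w →
      β * (log (1 - v) - log (1 - w)) - A ≤ log (φ (exp w)) - log (φ (exp v)) := by
  obtain ⟨C, hC, h⟩ := h
  refine ⟨log C, fun v w hw hvw => ?_⟩
  have hv1 : 0 < 1 - v := by linarith
  have hw1 : 0 < 1 - w := by linarith
  have h' := h (1 - v)⁻¹ ⟨by positivity, inv_le_one_of_one_le₀ (by linarith)⟩
    (1 - w)⁻¹ ⟨by positivity, inv_le_one_of_one_le₀ (by linarith)⟩
    (inv_anti₀ hw1 (by linarith))
  simp only [assocB0, one_div, inv_inv, sub_sub_cancel] at h'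
  have p1 := hφ _ (exp_pos v)
  have p2 := hφ _ (exp_pos w)
  have p3 : 0 < (1 - v)⁻¹ ^ (-β) := by positivity
  have p4 : 0 < (1 - w)⁻¹ ^ (-β) := by positivity
  have h' := Real.log_le_log (by positivity) h'
  rw [Real.log_mul p3.ne' p1.ne', Real.log_mul hC.ne' (by positivity),
    Real.log_mul p4.ne' p2.ne', Real.log_rpow (by positivity), Real.log_rpow (by positivity),
    Real.log_inv, Real.log_inv] at h'
  linarith

/-- In the coordinates `t = exp (sinh x)`, `s = exp y`, the map `φ` is a coarse expansion. -/
lemma exists_log_comp_exp_sinh_growth {φ : ℝ → ℝ} (hφ : ∀ t ∈ Ioi (0:ℝ), 0 < φ t) {α β : ℝ}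
    (hα : α < 0) (hβ : 0 < β)
    (hΦinf : AlmostDecreasingOn (fun u => u ^ (-α) * assocBinf φ u) (Ioc 0 1))
    (hΦ0 : AlmostIncreasingOn (fun u => u ^ (-β) * assocB0 φ u) (Ioc 0 1)) :
    ∃ γ > 0, ∃ A, ∀ x y, x ≤ y →
      γ * (y - x) - A ≤ log (φ (exp (sinh y))) - log (φ (exp (sinh x))) := by
  obtain ⟨A₁, h₁⟩ := exists_log_growth_of_nonneg hφ hΦinf
  obtain ⟨A₂, h₂⟩ := exists_log_growth_of_nonpos hφ hΦ0
  have hγ : 0 < min (-α) β := lt_min (by linarith) hβ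
  set γ := min (-α) β
  have hγα : γ ≤ -α := min_le_left _ _
  have hγβ : γ ≤ β := min_le_right _ _
  have hlog : 0 ≤ log 2 := Real.log_nonneg one_le_two
  have pos : ∀ x y, 0 ≤ x → x ≤ y → γ * (y - x) - (|A₁| - α * (2 * log 2))
      ≤ log (φ (exp (sinh y))) - log (φ (exp (sinh x))) := by
    intro x y hx hxy
    have hsx := Real.sinh_nonneg_iff.2 hx
    have hsxy := Real.sinh_le_sinh.2 hxy
    have e1 := abs_le.1 (abs_log_one_add_abs_sinh_sub_abs_le x)
    have e2 := abs_le.1 (abs_log_one_add_abs_sinh_sub_abs_le y)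
    rw [abs_of_nonneg hx, abs_of_nonneg hsx] at e1
    rw [abs_of_nonneg (hx.trans hxy), abs_of_nonneg (hsx.trans hsxy)] at e2
    have h := h₁ _ _ hsx hsxy
    have h3 : γ * (y - x) ≤ -α * (y - x) := mul_le_mul_of_nonneg_right hγα (by linarith)
    have h4 : -α * (y - x - 2 * log 2) ≤ -α * (log (1 + sinh y) - log (1 + sinh x)) :=
      mul_le_mul_of_nonneg_left (by linarith) (by linarith)
    linarith [le_abs_self A₁]
  have neg : ∀ x y, y ≤ 0 → x ≤ y → γ * (y - x) - (|A₂| + β * (2 * log 2))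
      ≤ log (φ (exp (sinh y))) - log (φ (exp (sinh x))) := by
    intro x y hy hxy
    have hsy := Real.sinh_nonpos_iff.2 hy
    have hsxy := Real.sinh_le_sinh.2 hxy
    have e1 := abs_le.1 (abs_log_one_add_abs_sinh_sub_abs_le x)
    have e2 := abs_le.1 (abs_log_one_add_abs_sinh_sub_abs_le y)
    rw [abs_of_nonpos (hxy.trans hy), abs_of_nonpos (hsxy.trans hsy), ← sub_eq_add_neg] at e1
    rw [abs_of_nonpos hy, abs_of_nonpos hsy, ← sub_eq_add_neg] at e2
    have h := h₂ _ _ hsy hsxy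
    have h3 : γ * (y - x) ≤ β * (y - x) := mul_le_mul_of_nonneg_right hγβ (by linarith)
    have h4 : β * (y - x - 2 * log 2) ≤ β * (log (1 - sinh x) - log (1 - sinh y)) :=
      mul_le_mul_of_nonneg_left (by linarith) (by linarith)
    linarith [le_abs_self A₂]
  have n₁ : 0 ≤ |A₁| - α * (2 * log 2) := by nlinarith [abs_nonneg A₁]
  have n₂ : 0 ≤ |A₂| + β * (2 * log 2) := by positivity
  refine ⟨γ, hγ, (|A₁| - α * (2 * log 2)) + (|A₂| + β * (2 * log 2)), fun x y hxy => ?_⟩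
  rcases le_total 0 x with hx | hx
  · linarith [pos x y hx hxy]
  rcases le_total y 0 with hy | hy
  · linarith [neg x y hy hxy]
  · linarith [pos 0 y le_rfl hy, neg x 0 le_rfl hx]

lemma exists_log_comp_exp_sinh_succ_le {φ : ℝ → ℝ} (hφ : SlowlyVarying φ)
    (hsq : EquivOn (fun t => φ (t ^ 2)) φ (Ioi 0)) {γ A : ℝ} (hγ : 0 < γ)
    (hA : ∀ x y, x ≤ y →
      γ * (y - x) - A ≤ log (φ (exp (sinh y))) - log (φ (exp (sinh x)))) :
    ∃ B, ∀ n : ℤ,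
      log (φ (exp (sinh (n + 1)))) ≤ log (φ (exp (sinh n))) + B := by
  obtain ⟨S, hS⟩ := hφ.exists_abs_log_sub_le
  obtain ⟨Q, hQ⟩ := hsq.exists_abs_log_sub_le hφ.2.1
  have mono : ∀ v w, v ≤ w → log (φ (exp v)) ≤ log (φ (exp w)) + A := by
    intro v w hvw
    obtain ⟨x, rfl⟩ := Real.sinh_surjective v
    obtain ⟨y, rfl⟩ := Real.sinh_surjective w
    have hxy := Real.sinh_le_sinh.1 hvw
    have := mul_nonneg hγ.le (sub_nonneg.2 hxy)
    linarith [hA x y hxy]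
  have quad : ∀ v, |log (φ (exp (4 * v))) - log (φ (exp v))| ≤ 2 * Q := by
    intro v
    have h1 := abs_le.1 (hQ v)
    have h2 := abs_le.1 (hQ (2 * v))
    rw [show 2 * (2 * v) = 4 * v by ring] at h2
    rw [abs_le]
    constructor <;> linarith
  refine ⟨2 * Q + S + 2 + A, fun n => ?_⟩
  rcases le_or_gt 0 n with hn | hn
  · have hn' : (0:ℝ) ≤ n := by exact_mod_cast hn
    have h1 := mono _ _ (sinh_add_one_le hn')
    have h2 := abs_le.1 (hS (4 * sinh n) (4 * sinh n + 2) (by linarith))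
    have h3 := abs_le.1 (quad (sinh n))
    linarith
  · have hn' : (n:ℝ) + 1 ≤ 0 := by exact_mod_cast hn
    have h0 := sinh_add_one_le (x := -(n + 1)) (by linarith)
    rw [show -((n:ℝ) + 1) + 1 = -n by ring, Real.sinh_neg, Real.sinh_neg] at h0
    have h1 := mono (4 * sinh (n + 1) - 2) (sinh n) (by linarith)
    have h2 := abs_le.1 (hS (4 * sinh (n + 1) - 2) (4 * sinh (n + 1)) (by linarith))
    have h3 := abs_le.1 (quad (sinh (n + 1)))
    linarith

/-- The weighted quasi-concave integrand is roughly constant at every fixed logarithmic scale,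
uniformly in the quasi-concave function. -/
lemma SlowlyVarying.exists_quasiconcave_bound {b : ℝ → ℝ} (hb : SlowlyVarying b) {θ : ℝ}
    (hθ0 : 0 ≤ θ) (hθ1 : θ ≤ 1) (M : ℝ) :
    ∃ D > 0, ∀ k : ℝ → ℝ, (∀ t ∈ Ioi (0:ℝ), 0 ≤ k t) → MonotoneOn k (Ioi 0) →
      AntitoneOn (fun t => k t / t) (Ioi 0) → ∀ y z, |y - z| ≤ M →
      exp y ^ (-θ) * b (exp y) * k (exp y) ≤ D * (exp z ^ (-θ) * b (exp z) * k (exp z)) := by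
  obtain ⟨C, hC, h⟩ := hb.exists_exp_bound
  refine ⟨C * exp M * exp M, by positivity, fun k hk hmono hanti y z hyz => ?_⟩
  have hby := hb.2.1 _ (exp_pos y)
  have hbz := hb.2.1 _ (exp_pos z)
  have hky := hk _ (exp_pos y)
  have hkz := hk _ (exp_pos z)
  have hM := abs_le.1 hyz
  have hpow : ∀ u : ℝ, exp u ^ (-θ) = exp (-θ * u) := fun u => by
    rw [← Real.exp_mul, mul_comm]
  rw [hpow, hpow]
  rcases le_total y z with hle | hle
  · have e1 : exp (-θ * y) ≤ exp M * exp (-θ * z) := by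
      rw [← Real.exp_add, Real.exp_le_exp]
      nlinarith [mul_le_mul_of_nonneg_right hθ1 (sub_nonneg.2 hle)]
    have e2 : b (exp y) ≤ C * exp M * b (exp z) := by
      refine (h y z hle).2.trans ?_
      gcongr
      linarith
    have e3 : k (exp y) ≤ k (exp z) := hmono (exp_pos y) (exp_pos z) (exp_le_exp.2 hle)
    calc _ ≤ (exp M * exp (-θ * z)) * (C * exp M * b (exp z)) * k (exp z) := by gcongr
      _ = _ := by ring
  · have e1 : exp (-θ * y) ≤ exp (-θ * z) := by
      rw [Real.exp_le_exp]
      nlinarith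
    have e2 : b (exp y) ≤ C * exp M * b (exp z) := by
      refine (h z y hle).1.trans ?_
      gcongr
      linarith
    have e3 : k (exp y) ≤ exp M * k (exp z) := by
      have := hanti (exp_pos z) (exp_pos y) (exp_le_exp.2 hle)
      calc k (exp y) = exp y * (k (exp y) / exp y) := by field_simp
        _ ≤ exp y * (k (exp z) / exp z) := by gcongr
        _ = exp (y - z) * k (exp z) := by rw [Real.exp_sub]; ring
        _ ≤ _ := by gcongr; linarith
    calc _ ≤ exp (-θ * z) * (C * exp M * b (exp z)) * (exp M * k (exp z)) := by gcongr
      _ = _ := by ring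

/-- The measure `dt / (t ℓ(t))` is comparable to `dx` in the coordinate `t = exp (sinh x)`. -/
lemma lintegral_div_mul_ell_comparison (h : ℝ → ENNReal) :
    ∫⁻ t in Ioi (0:ℝ), h t / ENNReal.ofReal (t * ell t) ≤ ∫⁻ x, h (exp (sinh x)) ∧
    ∫⁻ x, h (exp (sinh x)) ≤ 2 * ∫⁻ t in Ioi (0:ℝ), h t / ENNReal.ofReal (t * ell t) := by
  have key : ∀ x, ENNReal.ofReal (exp (sinh x) * cosh x) *
      (h (exp (sinh x)) / ENNReal.ofReal (exp (sinh x) * ell (exp (sinh x))))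
      = ENNReal.ofReal (cosh x / (1 + |sinh x|)) * h (exp (sinh x)) := by
    intro x
    have hpos : 0 < 1 + |sinh x| := by positivity
    rw [ell, Real.log_exp, ← mul_div_mul_left (cosh x) _ (exp_pos (sinh x)).ne',
      ENNReal.ofReal_div_of_pos (by positivity), div_eq_mul_inv, div_eq_mul_inv]
    ring
  have hlow : ∀ x, (1:ℝ) / 2 ≤ cosh x / (1 + |sinh x|) := by
    intro x
    have h1 := Real.one_le_cosh x
    have h2 : |sinh x| ≤ cosh x := by
      rw [Real.abs_sinh, ← Real.cosh_abs]
      exact (Real.sinh_lt_cosh _).le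
    rw [le_div_iff₀ (by positivity)]
    linarith
  have hupp : ∀ x, cosh x / (1 + |sinh x|) ≤ 1 := by
    intro x
    have h1 := abs_nonneg (sinh x)
    rw [div_le_one (by positivity)]
    refine le_of_sq_le_sq ?_ (by positivity)
    rw [Real.cosh_sq, ← sq_abs (sinh x)]
    nlinarith
  rw [lintegral_Ioi_eq_lintegral_exp_sinh, lintegral_congr key]
  constructor
  · refine lintegral_mono fun x => ?_
    refine mul_le_of_le_one_left zero_le ?_
    simpa using hupp x
  · rw [← lintegral_const_mul' _ _ (by simp)]
    refine lintegral_mono fun x => ?_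
    rw [← mul_assoc, ← ENNReal.ofReal_ofNat, ← ENNReal.ofReal_mul (by norm_num)]
    refine le_mul_of_one_le_left zero_le ?_
    rw [ENNReal.one_le_ofReal]
    linarith [hlow x]

theorem change_of_variables_quasiconcave (q θ : ℝ) (hq : 1 ≤ q)
    (hθ0 : 0 ≤ θ) (hθ1 : θ ≤ 1)
    (b : ℝ → ℝ) (hb : SlowlyVarying b)
    (φ : ℝ → ℝ) (hφ : SlowlyVarying φ)
    (hsq : EquivOn (fun t => φ (t ^ 2)) φ (Ioi 0))
    (α β : ℝ) (hα : α < 0) (hβ : 0 < β)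
    (hΦinf : AlmostDecreasingOn (fun u => u ^ (-α) * assocBinf φ u) (Ioc 0 1))
    (hΦ0 : AlmostIncreasingOn (fun u => u ^ (-β) * assocB0 φ u) (Ioc 0 1)) :
    ∃ c > (0:ℝ), ∃ C > (0:ℝ), ∀ k : ℝ → ℝ,
      (∀ t ∈ Ioi (0:ℝ), 0 ≤ k t) → MonotoneOn k (Ioi 0) →
      AntitoneOn (fun t => k t / t) (Ioi 0) →
      ENNReal.ofReal c *
          (∫⁻ t in Ioi (0:ℝ),
            ENNReal.ofReal (t ^ (-θ) * b t * k t) ^ q / ENNReal.ofReal t) ^ (1 / q)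
        ≤ (∫⁻ t in Ioi (0:ℝ),
            ENNReal.ofReal (φ t ^ (-θ) * b (φ t) * k (φ t)) ^ q
              / ENNReal.ofReal (t * ell t)) ^ (1 / q) ∧
      (∫⁻ t in Ioi (0:ℝ),
            ENNReal.ofReal (φ t ^ (-θ) * b (φ t) * k (φ t)) ^ q
              / ENNReal.ofReal (t * ell t)) ^ (1 / q)
        ≤ ENNReal.ofReal C *
          (∫⁻ t in Ioi (0:ℝ),
            ENNReal.ofReal (t ^ (-θ) * b t * k t) ^ q / ENNReal.ofReal t) ^ (1 / q) := by
  have hφpos := hφ.2.1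
  obtain ⟨γ, hγ, A, hA⟩ := exists_log_comp_exp_sinh_growth hφpos hα hβ hΦinf hΦ0
  obtain ⟨B, hB⟩ := exists_log_comp_exp_sinh_succ_le hφ hsq hγ hA
  have hψ : Measurable fun x => log (φ (exp (sinh x))) :=
    Real.measurable_log.comp (hφ.1.comp (Real.measurable_exp.comp Real.continuous_sinh.measurable))
  obtain ⟨M, -, hcomp⟩ := exists_lintegral_comp_comparison hψ hγ hA hB
  obtain ⟨D, hD, hquasi⟩ := hb.exists_quasiconcave_bound hθ0 hθ1 M
  obtain ⟨K, hK, hcomp⟩ := hcomp (D ^ q) (by positivity)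
  have hq0 : 0 < q := by linarith
  have hroot : 0 ≤ 1 / q := by positivity
  refine ⟨((2 * K) ^ (1 / q))⁻¹, by positivity, K ^ (1 / q), by positivity,
    fun k hk hmono hanti => ?_⟩
  set F : ℝ → ENNReal := fun s => ENNReal.ofReal (s ^ (-θ) * b s * k s) ^ q with hF
  have hkexp : Measurable fun y => k (exp y) :=
    Monotone.measurable fun y z hyz => hmono (exp_pos y) (exp_pos z) (exp_le_exp.2 hyz)
  have hG : Measurable fun y => F (exp y) := by
    have hbexp : Measurable fun y => b (exp y) := hb.1.comp Real.measurable_exp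
    exact ((((Real.measurable_exp.pow_const _).mul hbexp).mul hkexp).ennreal_ofReal).pow_const q
  have hGD : ∀ y z, |y - z| ≤ M → F (exp y) ≤ ENNReal.ofReal (D ^ q) * F (exp z) := by
    intro y z hyz
    simp only [hF]
    rw [← ENNReal.ofReal_rpow_of_pos hD, ← ENNReal.mul_rpow_of_nonneg _ _ hq0.le,
      ← ENNReal.ofReal_mul hD.le]
    exact ENNReal.rpow_le_rpow
      (ENNReal.ofReal_le_ofReal (hquasi k hk hmono hanti y z hyz)) hq0.le
  obtain ⟨h1, h2⟩ := hcomp _ hG hGD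
  simp only [Real.exp_log (hφpos _ (exp_pos _))] at h1 h2
  obtain ⟨h3, h4⟩ := lintegral_div_mul_ell_comparison (fun t => F (φ t))
  have hleft : ∫⁻ t in Ioi (0:ℝ), F t / ENNReal.ofReal t = ∫⁻ y, F (exp y) := by
    rw [lintegral_Ioi_eq_lintegral_exp]
    refine lintegral_congr fun y => ?_
    exact ENNReal.mul_div_cancel (by simp [exp_pos]) (by simp)
  change ENNReal.ofReal _ * (∫⁻ t in Ioi (0:ℝ), F t / ENNReal.ofReal t) ^ (1 / q)
      ≤ (∫⁻ t in Ioi (0:ℝ), F (φ t) / ENNReal.ofReal (t * ell t)) ^ (1 / q) ∧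
    (∫⁻ t in Ioi (0:ℝ), F (φ t) / ENNReal.ofReal (t * ell t)) ^ (1 / q)
      ≤ ENNReal.ofReal _ * (∫⁻ t in Ioi (0:ℝ), F t / ENNReal.ofReal t) ^ (1 / q)
  rw [hleft]
  constructor
  · have hpos : 0 < (2 * K) ^ (1 / q) := by positivity
    rw [ENNReal.ofReal_inv_of_pos hpos, mul_comm, ← div_eq_mul_inv]
    refine ENNReal.div_le_of_le_mul' ?_
    rw [← ENNReal.ofReal_rpow_of_pos (by positivity), ← ENNReal.mul_rpow_of_nonneg _ _ hroot]
    refine ENNReal.rpow_le_rpow (h2.trans ?_) hroot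
    rw [mul_comm 2 K, ENNReal.ofReal_mul hK.le, mul_assoc, ENNReal.ofReal_ofNat]
    gcongr
  · rw [← ENNReal.ofReal_rpow_of_pos hK, ← ENNReal.mul_rpow_of_nonneg _ _ hroot]
    exact ENNReal.rpow_le_rpow (h3.trans h1) hroot
end
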